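/- arXiv:2605.17157 — 15 statements merged into one kernel-verified Lean document; each statement's English description precedes it below -/
import Mathlib

section
/- The involution (x,y) ↦ (−r₁−y, −r₁−x) maps D(p,u) bijectively onto D′(p,u) and maps D′(p,u) bijectively onto D(p,u). Consequently, {b − a : (a,b) ∈ D(p,u)} = {b − a : (a,b) ∈ D′(p,u)}. -/
/-- Lemma 1: the involution `(x, y) ↦ (-r₁-y, -r₁-x)` maps the set `D(p,u)` of pairs
satisfying condition (4) bijectively onto the set `D'(p,u)` of pairs satisfying
condition (5), and vice versa; consequently the two difference sets coincide. -/
theorem stmt_0 (p u r1 : ℤ) (hp : 3 ≤ p) (hpu : IsCoprime u p)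
    (hr1pos : 0 < r1) (hr1lt : r1 < p) (hur1 : (u * r1) % p = 1) :
    (∀ a b : ℤ,
      (a < b ∧ ∀ n : ℤ, a < n → n < b →
          max ((u * a) % p) ((u * b) % p) < (u * n) % p) ↔
      ((-r1 - b) < (-r1 - a) ∧ ∀ n : ℤ, (-r1 - b) < n → n < (-r1 - a) →
          (u * n) % p < min ((u * (-r1 - b)) % p) ((u * (-r1 - a)) % p))) ∧
    (∀ a b : ℤ,
      (a < b ∧ ∀ n : ℤ, a < n → n < b →
          (u * n) % p < min ((u * a) % p) ((u * b) % p)) ↔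
      ((-r1 - b) < (-r1 - a) ∧ ∀ n : ℤ, (-r1 - b) < n → n < (-r1 - a) →
          max ((u * (-r1 - b)) % p) ((u * (-r1 - a)) % p) < (u * n) % p)) ∧
    {d : ℤ | ∃ a b : ℤ, (a < b ∧ ∀ n : ℤ, a < n → n < b →
        max ((u * a) % p) ((u * b) % p) < (u * n) % p) ∧ d = b - a} =
    {d : ℤ | ∃ a b : ℤ, (a < b ∧ ∀ n : ℤ, a < n → n < b →
        (u * n) % p < min ((u * a) % p) ((u * b) % p)) ∧ d = b - a} := by
  have key : ∀ x : ℤ, (u * (-r1 - x)) % p = p - 1 - (u * x) % p := by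
    intro x
    have h1 := Int.emod_add_mul_ediv (u * r1) p
    have h2 := Int.emod_add_mul_ediv (u * x) p
    have h3 := Int.emod_nonneg (u * x) (show p ≠ 0 by omega)
    have h4 := Int.emod_lt_of_pos (u * x) (show 0 < p by omega)
    rw [hur1] at h1
    have e : u * (-r1 - x) = (p - 1 - (u * x) % p)
        + p * (-((u * r1) / p + (u * x) / p + 1)) := by
      linear_combination h1 + h2
    rw [e, Int.add_mul_emod_self_left]
    exact Int.emod_eq_of_lt (by omega) (by omega)
  have A : ∀ a b : ℤ,
      (a < b ∧ ∀ n : ℤ, a < n → n < b →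
          max ((u * a) % p) ((u * b) % p) < (u * n) % p) ↔
      ((-r1 - b) < (-r1 - a) ∧ ∀ n : ℤ, (-r1 - b) < n → n < (-r1 - a) →
          (u * n) % p < min ((u * (-r1 - b)) % p) ((u * (-r1 - a)) % p)) := by
    intro a b
    rw [key a, key b]
    constructor
    · rintro ⟨h, H⟩
      refine ⟨by omega, fun n h1 h2 => ?_⟩
      have := H (-r1 - n) (by omega) (by omega)
      rw [key n] at this
      omega
    · rintro ⟨h, H⟩
      refine ⟨by omega, fun n h1 h2 => ?_⟩
      have := H (-r1 - n) (by omega) (by omega)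
      rw [key n] at this
      omega
  have B : ∀ a b : ℤ,
      (a < b ∧ ∀ n : ℤ, a < n → n < b →
          (u * n) % p < min ((u * a) % p) ((u * b) % p)) ↔
      ((-r1 - b) < (-r1 - a) ∧ ∀ n : ℤ, (-r1 - b) < n → n < (-r1 - a) →
          max ((u * (-r1 - b)) % p) ((u * (-r1 - a)) % p) < (u * n) % p) := by
    intro a b
    have := A (-r1 - b) (-r1 - a)
    rw [sub_sub_cancel, sub_sub_cancel] at this
    exact this.symm
  refine ⟨A, B, ?_⟩
  ext d
  constructor
  · rintro ⟨a, b, h, rfl⟩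
    exact ⟨_, _, (A a b).1 h, by ring⟩
  · rintro ⟨a, b, h, rfl⟩
    exact ⟨_, _, (B a b).1 h, by ring⟩
end

section
/- (Main Lemma) The set D_Δ(p,u) = {b − a : (a,b) ∈ D(p,u)} equals {r_{i−1} − z·r_i : 1 ≤ i ≤ t and 0 ≤ z ≤ Z_i − 1}. -/
def Rec1 (p v d : ℤ) : Prop := ∀ n : ℤ, 0 < n → n < d → (v * d) % p < (v * n) % p

theorem aux_sub (p X Y : ℤ) (hp : 0 < p) (h : Y % p ≤ X % p) :
    (X - Y) % p = X % p - Y % p := by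
  rw [Int.sub_emod]
  have h1 := Int.emod_lt_of_pos X hp
  have h2 := Int.emod_nonneg Y hp.ne'
  exact Int.emod_eq_of_lt (by linarith) (by linarith)

theorem aux_D (p u d : ℤ) (hp : 0 < p) :
    (∃ a b : ℤ, (a < b ∧ ∀ n : ℤ, a < n → n < b →
        max ((u * a) % p) ((u * b) % p) < (u * n) % p) ∧ d = b - a) ↔
    0 < d ∧ ∃ s : ℤ, (s = 1 ∨ s = -1) ∧ Rec1 p (s * u) d := by
  constructor
  · rintro ⟨a, b, ⟨hab, h⟩, rfl⟩
    refine ⟨by linarith, ?_⟩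
    rcases le_total ((u * a) % p) ((u * b) % p) with hc | hc
    · refine ⟨1, Or.inl rfl, ?_⟩
      intro n h0 h1
      have h2 := h (a + n) (by linarith) (by linarith)
      rw [max_lt_iff] at h2
      have e1 : 1 * u * (b - a) = u * b - u * a := by ring
      have e2 : 1 * u * n = u * (a + n) - u * a := by ring
      rw [e1, e2, aux_sub p _ _ hp hc, aux_sub p _ _ hp h2.1.le]
      linarith [h2.2]
    · refine ⟨-1, Or.inr rfl, ?_⟩
      intro n h0 h1
      have h2 := h (b - n) (by linarith) (by linarith)
      rw [max_lt_iff] at h2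
      have e1 : -1 * u * (b - a) = u * a - u * b := by ring
      have e2 : -1 * u * n = u * (b - n) - u * b := by ring
      rw [e1, e2, aux_sub p _ _ hp hc, aux_sub p _ _ hp h2.2.le]
      linarith [h2.1]
  · rintro ⟨hd, s, rfl | rfl, h⟩
    · refine ⟨0, d, ⟨hd, ?_⟩, by ring⟩
      intro n h0 h1
      have h2 := h n h0 h1
      rw [one_mul] at h2
      have h3 := Int.emod_nonneg (u * d) hp.ne'
      simp only [mul_zero, Int.zero_emod]
      exact max_lt (by linarith) h2
    · refine ⟨-d, 0, ⟨by linarith, ?_⟩, by ring⟩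
      intro n h0 h1
      have h2 := h (-n) (by linarith) (by linarith)
      have e1 : -1 * u * d = u * -d := by ring
      have e2 : -1 * u * -n = u * n := by ring
      rw [e1, e2] at h2
      have h3 := Int.emod_nonneg (u * -d) hp.ne'
      simp only [mul_zero, Int.zero_emod]
      exact max_lt h2 (by linarith)

/-- lattice coordinates -/
theorem aux_coord (p v d e r q n y : ℤ) (hp : 0 < p)
    (hd : p ∣ v * d - e) (hr : p ∣ v * r + q) (hdet : d * q + e * r = p)
    (hy : p ∣ v * n - y) : ∃ α β : ℤ, n = α * d + β * r ∧ y = α * e - β * q := by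
  obtain ⟨A, hA⟩ := hd
  obtain ⟨B, hB⟩ := hr
  obtain ⟨C, hC⟩ := hy
  have h1 : n * q + y * r = p * (n * B - C * r) := by linear_combination n * hB - r * hC
  have h2 : n * e - y * d = p * (C * d - n * A) := by linear_combination d * hC - n * hA
  refine ⟨n * B - C * r, C * d - n * A, ?_, ?_⟩
  · apply mul_left_cancel₀ hp.ne'
    linear_combination d * h1 + r * h2 - n * hdet
  · apply mul_left_cancel₀ hp.ne'
    linear_combination e * h1 - q * h2 - y * hdet

theorem aux_dvd (p X : ℤ) : p ∣ X - X % p := Int.dvd_self_sub_emod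

theorem aux_mod (p X y : ℤ) (h : p ∣ X - y) (h0 : 0 ≤ y) (h1 : y < p) : X % p = y := by
  have := (Int.emod_emod_of_dvd X (dvd_refl p))
  rw [Int.emod_eq_emod_iff_emod_sub_eq_zero.mpr (Int.emod_eq_zero_of_dvd h)]
  exact Int.emod_eq_of_lt h0 h1

theorem aux_fwd (p v d e r q : ℤ) (hp : 0 < p) (hd0 : 0 < d) (he0 : 0 ≤ e) (hr0 : 0 < r)
    (hq0 : 0 < q)
    (hd : p ∣ v * d - e) (hr : p ∣ v * r + q) (hdet : d * q + e * r = p) : Rec1 p v d := by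
  intro n h0 h1
  have hep : e < p := by nlinarith [mul_pos hd0 hq0]
  rw [aux_mod p _ e hd he0 hep]
  by_contra hcon
  push Not at hcon
  have hy0 := Int.emod_nonneg (v * n) hp.ne'
  obtain ⟨α, β, e1, e2⟩ := aux_coord p v d e r q n _ hp hd hr hdet (aux_dvd p (v * n))
  rw [e2] at hcon hy0
  rcases le_or_gt α 0 with ha | ha
  · rcases le_or_gt β 0 with hb | hb
    · nlinarith
    · nlinarith
  · rcases lt_or_ge β 0 with hb | hb
    · nlinarith
    · nlinarith

/-- records between consecutive remainders -/
theorem aux_bwd (p v R r a b Z r' d : ℤ) (hp : 0 < p) (hr0 : 0 < r) (hrR : r < R)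
    (ha : 0 ≤ a) (hb : 0 < b)
    (hR : p ∣ v * R - a) (hr : p ∣ v * r + b) (hdet : R * b + r * a = p)
    (hZ : R = Z * r + r') (hr'0 : 0 ≤ r') (hr' : r' < r) (hz1 : r' = 0 → r = 1)
    (hd1 : r < d) (hd2 : d ≤ R) (s : ℤ) (hs : s = 1 ∨ s = -1) (h : Rec1 p (s * v) d) :
    ∃ z : ℤ, 0 ≤ z ∧ z ≤ Z - 1 ∧ d = R - z * r := by
  have hbp : b < p := by nlinarith [mul_nonneg hr0.le ha]
  have hZ1 : 1 ≤ Z := by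
    by_contra hc
    have : Z ≤ 0 := by omega
    nlinarith
  have hdet' : R * b + a * r = p := by linarith
  have hy0 := Int.emod_nonneg (s * v * d) hp.ne'
  have hyp := Int.emod_lt_of_pos (s * v * d) hp
  have hdv := aux_dvd p (s * v * d)
  generalize hy : (s * v * d) % p = y at hy0 hyp hdv
  rcases hs with rfl | rfl
  · rw [one_mul] at hdv
    obtain ⟨α, β, e1, e2⟩ := aux_coord p v R a r b d y hp hR hr hdet' hdv
    have hα : 1 ≤ α := by
      by_contra hc
      have : α ≤ 0 := by omega
      rcases le_or_gt β 0 with hb | hb <;> nlinarith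
    have hβ : β ≤ 0 := by
      by_contra hc
      have : 1 ≤ β := by omega
      nlinarith
    rcases eq_or_lt_of_le hα with hα1 | hα2
    · refine ⟨-β, by linarith, ?_, by rw [e1, ← hα1]; ring⟩
      by_contra hc
      have : Z ≤ -β := by omega
      rw [← hα1] at e1
      nlinarith
    · exfalso
      have hz : Z ≤ -β := by
        by_contra hc
        have h3 : -β + 1 ≤ Z := by omega
        have h4 : (-β + 1) * r ≤ Z * r := mul_le_mul_of_nonneg_right h3 hr0.le
        have h5 : 2 * R ≤ α * R := mul_le_mul_of_nonneg_right hα2 (by linarith)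
        nlinarith
      have key : ∀ w : ℤ, 0 ≤ w → w ≤ Z → 0 < R - w * r → R - w * r < d → False := by
        intro w hw0 hw1 hw2 hw3
        have h6 := h _ hw2 hw3
        have h7 : a + w * b ≤ y := by
          rw [e2]
          have : w * b ≤ -β * b := mul_le_mul_of_nonneg_right (by linarith) hb.le
          nlinarith
        rw [hy, aux_mod p _ (a + w * b) ?_ (by positivity) (by linarith)] at h6
        · linarith
        · obtain ⟨A, hA⟩ := hR
          obtain ⟨B, hB⟩ := hr
          exact ⟨A - w * B, by linear_combination hA - w * hB⟩
      rcases eq_or_lt_of_le hr'0 with h0 | h0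
      · have hr1 := hz1 h0.symm
        apply key (Z - 1) (by linarith) (by linarith)
        · rw [hZ]; linarith
        · rw [hZ]; nlinarith
      · exact key Z (by linarith) le_rfl (by linarith) (by linarith)
  · have h6 := h r hr0 hd1
    rw [hy, aux_mod p (-1 * v * r) b
      (by obtain ⟨B, hB⟩ := hr; exact ⟨-B, by linear_combination -hB⟩) hb.le hbp] at h6
    have hdv' : p ∣ v * d - -y := by
      obtain ⟨B, hB⟩ := hdv; exact ⟨-B, by linear_combination -hB⟩
    obtain ⟨α, β, e1, e2⟩ := aux_coord p v R a r b d (-y) hp hR hr hdet' hdv'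
    rcases le_or_gt α 0 with hα | hα
    · exfalso
      have hβ : 1 ≤ β := by
        by_contra hc
        have : β ≤ 0 := by omega
        nlinarith
      have hβ2 : β < 2 := by
        by_contra hc
        have : 2 ≤ β := by omega
        nlinarith
      have : β = 1 := by omega
      subst this
      nlinarith
    · have hβ : β ≤ 0 := by
        by_contra hc
        have : 1 ≤ β := by omega
        nlinarith
      have hβ0 : β = 0 := by
        by_contra hc
        have : β ≤ -1 := by omega
        nlinarith
      subst hβ0
      have : α = 1 := by
        by_contra hc
        have : 2 ≤ α := by omega
        nlinarith
      subst this
      exact ⟨0, le_rfl, by linarith, by linarith⟩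

theorem aux_state (p u : ℤ) (hp : 3 ≤ p)
    (t : ℕ) (r Z : ℕ → ℤ)
    (hr0 : r 0 = p) (hr1pos : 0 < r 1) (hr1lt : r 1 < p) (hur1 : (u * r 1) % p = 1)
    (hrec : ∀ i, 1 ≤ i → i ≤ t →
      r (i - 1) = Z i * r i + r (i + 1) ∧ 0 ≤ r (i + 1) ∧ r (i + 1) < r i)
    (j : ℕ) : j + 1 ≤ t → ∃ s a b : ℤ, (s = 1 ∨ s = -1) ∧ 0 ≤ a ∧ 0 < b ∧
      p ∣ s * u * r j - a ∧ p ∣ s * u * r (j + 1) + b ∧ r j * b + r (j + 1) * a = p ∧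
      r (j + 1) < r j ∧ 0 < r (j + 1) := by
  induction j with
  | zero =>
    intro _
    refine ⟨-1, 0, 1, Or.inr rfl, le_rfl, one_pos, ?_, ?_, ?_, ?_, hr1pos⟩
    · rw [hr0]; exact ⟨-u, by ring⟩
    · have := aux_dvd p (u * r 1)
      rw [hur1] at this
      obtain ⟨B, hB⟩ := this
      exact ⟨-B, by simp only [zero_add]; linear_combination -hB⟩
    · rw [hr0]; ring
    · rw [hr0]; exact hr1lt
  | succ j ih =>
    intro hj
    obtain ⟨s, a, b, hs, ha, hb, ⟨A, hA⟩, ⟨B, hB⟩, hdet, hlt, hpos⟩ := ih (by omega)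
    obtain ⟨h1, h2, h3⟩ := hrec (j + 1) (by omega) (by omega)
    obtain ⟨h4, h5, h6⟩ := hrec (j + 2) (by omega) (by omega)
    simp only [Nat.add_sub_cancel] at h1
    have h7 : 0 < r (j + 1 + 1) := lt_of_le_of_lt h5 h6
    have hZ : 0 < Z (j + 1) := by
      by_contra hc
      push Not at hc
      nlinarith
    refine ⟨-s, b, a + Z (j + 1) * b, ?_, hb.le, by positivity, ⟨-B, ?_⟩,
      ⟨-A + Z (j + 1) * B, ?_⟩, ?_, h3, h7⟩
    · rcases hs with rfl | rfl <;> simp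
    · linear_combination -hB
    · linear_combination -hA + Z (j + 1) * hB + s * u * h1
    · linear_combination hdet - b * h1

theorem aux_find (r : ℕ → ℤ) (d : ℤ) (hd : d ≤ r 0) (t : ℕ) (h : r t < d) :
    ∃ j, j + 1 ≤ t ∧ r (j + 1) < d ∧ d ≤ r j := by
  induction t with
  | zero => linarith
  | succ t ih =>
    by_cases hc : r t < d
    · obtain ⟨j, h1, h2⟩ := ih hc
      exact ⟨j, by omega, h2⟩
    · exact ⟨t, le_rfl, h, not_lt.mp hc⟩

/-- Main Lemma: `D_Δ(p,u) = {b - a : (a,b) ∈ D(p,u)}` equals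
`{r_{i-1} - z·r_i : 1 ≤ i ≤ t, 0 ≤ z ≤ Z_i - 1}`, where `(r_i)` and `(Z_i)` are the
Euclidean algorithm sequences for `p` and `r₁` (the inverse of `u` mod `p`). -/
theorem stmt_1 (p u : ℤ) (hp : 3 ≤ p) (hpu : IsCoprime u p)
    (t : ℕ) (ht : 1 ≤ t) (r Z : ℕ → ℤ)
    (hr0 : r 0 = p) (hr1pos : 0 < r 1) (hr1lt : r 1 < p) (hur1 : (u * r 1) % p = 1)
    (hrec : ∀ i, 1 ≤ i → i ≤ t →
      r (i - 1) = Z i * r i + r (i + 1) ∧ 0 ≤ r (i + 1) ∧ r (i + 1) < r i)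
    (hrt : r t = 1) :
    {d : ℤ | ∃ a b : ℤ, (a < b ∧ ∀ n : ℤ, a < n → n < b →
        max ((u * a) % p) ((u * b) % p) < (u * n) % p) ∧ d = b - a} =
    {d : ℤ | ∃ i : ℕ, 1 ≤ i ∧ i ≤ t ∧
        ∃ z : ℤ, 0 ≤ z ∧ z ≤ Z i - 1 ∧ d = r (i - 1) - z * r i} := by
  have hp0 : 0 < p := by linarith
  have hst := aux_state p u hp t r Z hr0 hr1pos hr1lt hur1 hrec
  ext d
  rw [Set.mem_setOf_eq, Set.mem_setOf_eq, aux_D p u d hp0]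
  constructor
  · rintro ⟨hd, s, hs, h⟩
    have hdp : d ≤ r 0 := by
      by_contra hc
      push Not at hc
      rw [hr0] at hc
      have h1 := h p hp0 hc
      rw [Int.mul_emod_left] at h1
      linarith [Int.emod_nonneg (s * u * d) hp0.ne']
    rcases lt_or_ge (r t) d with hlt | hge
    · obtain ⟨j, hj, h1, h2⟩ := aux_find r d hdp t hlt
      obtain ⟨s', a, b, hs', ha, hb, hA, hB, hdet, hrr, hpos⟩ := hst j hj
      obtain ⟨g1, g2, g3⟩ := hrec (j + 1) (by omega) hj
      simp only [Nat.add_sub_cancel] at g1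
      refine ⟨j + 1, by omega, hj, ?_⟩
      simp only [Nat.add_sub_cancel]
      refine aux_bwd p (s' * u) (r j) (r (j + 1)) a b (Z (j + 1)) (r (j + 1 + 1)) d hp0 hpos hrr
        ha hb hA hB hdet g1 g2 g3 ?_ h1 h2 (s * s') ?_ ?_
      · intro h0
        rcases Nat.lt_or_ge (j + 1) t with hjt | hjt
        · have := hrec (j + 1 + 1) (by omega) hjt
          linarith [this.2.1, this.2.2]
        · have : j + 1 = t := by omega
          rw [this, hrt]
      · rcases hs with rfl | rfl <;> rcases hs' with rfl | rfl <;> simp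
      · have : s * s' * (s' * u) = s * u := by rcases hs' with rfl | rfl <;> ring
        rw [this]; exact h
    · obtain ⟨j, rfl⟩ : ∃ j, t = j + 1 := ⟨t - 1, by omega⟩
      obtain ⟨g1, g2, g3⟩ := hrec (j + 1) (by omega) le_rfl
      obtain ⟨s', a, b, hs', ha, hb, hA, hB, hdet, hrr, hpos⟩ := hst j le_rfl
      rw [hrt] at g1 g3 hge hrr
      have : r (j + 1 + 1) = 0 := by linarith
      have hd1 : d = 1 := by linarith
      rw [this] at g1
      refine ⟨j + 1, by omega, le_rfl, Z (j + 1) - 1, ?_, le_rfl, ?_⟩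
      · simp only [Nat.add_sub_cancel] at g1
        linarith
      · rw [g1, hd1, hrt]; ring
  · rintro ⟨i, hi, hit, z, hz0, hz1, rfl⟩
    obtain ⟨j, rfl⟩ : ∃ j, i = j + 1 := ⟨i - 1, by omega⟩
    obtain ⟨s, a, b, hs, ha, hb, ⟨A, hA⟩, hB, hdet, hrr, hpos⟩ := hst j hit
    obtain ⟨g1, g2, g3⟩ := hrec (j + 1) (by omega) hit
    simp only [Nat.add_sub_cancel] at g1 ⊢
    have hd : 0 < r j - z * r (j + 1) := by nlinarith
    refine ⟨hd, s, hs, aux_fwd p (s * u) _ (a + z * b) (r (j + 1)) b hp0 hd (by positivity) hpos hb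
      ?_ hB ?_⟩
    · obtain ⟨B, hB⟩ := hB
      exact ⟨A - z * B, by linear_combination hA - z * hB⟩
    · linear_combination hdet
end

section
/- For every tuple z ∈ 𝒵 other than the zero tuple, 0 < R(z) < p; and R of the zero tuple equals 0. -/
/-- Lemma 3: for every tuple `z ∈ 𝒵` other than the zero tuple, `0 < R(z) < p`,
and `R` of the zero tuple is `0`.  Here `𝒵` consists of the tuples `(z₁,…,z_t)` with
`0 ≤ z_i ≤ Z_i`, `z_t ≤ Z_t - 1`, which are zero or whose first nonzero index is odd,
and `R(z) = Σ_{1≤i≤t} z_i·(-1)^{i-1}·r_i`. -/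
theorem stmt_3 (p u : ℤ) (hp : 3 ≤ p) (hpu : IsCoprime u p)
    (t : ℕ) (ht : 1 ≤ t) (r Z : ℕ → ℤ)
    (hr0 : r 0 = p) (hr1pos : 0 < r 1) (hr1lt : r 1 < p) (hur1 : (u * r 1) % p = 1)
    (hrec : ∀ i, 1 ≤ i → i ≤ t →
      r (i - 1) = Z i * r i + r (i + 1) ∧ 0 ≤ r (i + 1) ∧ r (i + 1) < r i)
    (hrt : r t = 1) :
    ∀ z : ℕ → ℤ,
      (∀ i, 1 ≤ i → i ≤ t → 0 ≤ z i ∧ z i ≤ Z i) →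
      z t ≤ Z t - 1 →
      ((∀ i, 1 ≤ i → i ≤ t → z i = 0) ∨
        (∃ i, 1 ≤ i ∧ i ≤ t ∧ 0 < z i ∧ Odd i ∧ ∀ j, 1 ≤ j → j < i → z j = 0)) →
      ((¬ (∀ i, 1 ≤ i → i ≤ t → z i = 0)) →
        0 < ∑ i ∈ Finset.Icc 1 t, z i * (-1 : ℤ) ^ (i - 1) * r i ∧
        ∑ i ∈ Finset.Icc 1 t, z i * (-1 : ℤ) ^ (i - 1) * r i < p) ∧
      ((∀ i, 1 ≤ i → i ≤ t → z i = 0) →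
        ∑ i ∈ Finset.Icc 1 t, z i * (-1 : ℤ) ^ (i - 1) * r i = 0) := by
  classical
  intro z hz hzt hcase
  refine ⟨fun hne => ?_, fun h0 => ?_⟩
  swap
  · apply Finset.sum_eq_zero
    intro i hi
    rw [Finset.mem_Icc] at hi
    rw [h0 i hi.1 hi.2]; ring
  rcases hcase with h | ⟨i, hi1, hit, hzi, hodd, hlt⟩
  · exact absurd h hne
  set f : ℕ → ℤ := fun i => z i * (-1 : ℤ) ^ (i - 1) * r i with hf
  have hstep : ∀ k, k ≤ t → ∑ j ∈ Finset.Icc k t, f j = f k + ∑ j ∈ Finset.Icc (k+1) t, f j := by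
    intro k hk
    have : Finset.Icc k t = insert k (Finset.Icc (k+1) t) := by
      ext x; simp only [Finset.mem_insert, Finset.mem_Icc]; omega
    rw [this, Finset.sum_insert (by simp)]
  have hend : ∑ j ∈ Finset.Icc (t+1) t, f j = 0 := by simp
  -- bounds on the signed tails
  have hb : ∀ d k, 1 ≤ k → k + d = t →
      -r k < (-1 : ℤ) ^ (k-1) * ∑ j ∈ Finset.Icc k t, f j ∧
      (-1 : ℤ) ^ (k-1) * ∑ j ∈ Finset.Icc k t, f j < r (k-1) ∧
      (0 < z k → 0 < (-1 : ℤ) ^ (k-1) * ∑ j ∈ Finset.Icc k t, f j) := by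
    intro d
    induction d with
    | zero =>
      intro k hk hkt
      have hkt : k = t := by omega
      subst hkt
      obtain ⟨h1, h2, h3⟩ := hrec k hk le_rfl
      obtain ⟨h4, h5⟩ := hz k hk le_rfl
      have e : (-1 : ℤ) ^ (k-1) * ∑ j ∈ Finset.Icc k k, f j = z k := by
        rw [Finset.Icc_self, Finset.sum_singleton, hf]
        simp only [hrt]
        have : (-1 : ℤ) ^ (k-1) * (-1 : ℤ) ^ (k-1) = 1 := by
          rw [← mul_pow]; simp
        linear_combination z k * this
      rw [e]
      rw [hrt] at h1 h3 ⊢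
      refine ⟨by linarith, by linarith, fun h => h⟩
    | succ d ih =>
      intro k hk hkt
      obtain ⟨h1, h2, h3⟩ := hrec k hk (by omega)
      obtain ⟨h4, h5⟩ := hz k hk (by omega)
      obtain ⟨a, b, -⟩ := ih (k+1) (by omega) (by omega)
      rw [hstep k (by omega)]
      have e : (-1 : ℤ) ^ (k-1) * (f k + ∑ j ∈ Finset.Icc (k+1) t, f j)
          = z k * r k - (-1 : ℤ) ^ (k+1-1) * ∑ j ∈ Finset.Icc (k+1) t, f j := by
        obtain ⟨m, rfl⟩ : ∃ m, k = m + 1 := ⟨k-1, by omega⟩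
        have : (-1 : ℤ) ^ m * (-1 : ℤ) ^ m = 1 := by
          rw [← mul_pow]; simp
        simp only [hf, Nat.add_sub_cancel, pow_succ]
        linear_combination z (m+1) * r (m+1) * this
      rw [e]
      rw [Nat.add_sub_cancel] at a b ⊢
      have hp : 0 < r k := by linarith
      have p1 : 0 ≤ z k * r k := by positivity
      have p2 : z k * r k ≤ Z k * r k := by gcongr
      refine ⟨by linarith, by linarith, fun h => ?_⟩
      have : 1 * r k ≤ z k * r k := by gcongr; omega
      linarith
  constructor
  · have h := (hb (t - i) i hi1 (by omega)).2.2 hzi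
    have hev : Even (i - 1) := by
      obtain ⟨m, rfl⟩ := hodd; exact ⟨m, by omega⟩
    rw [hev.neg_one_pow, one_mul] at h
    have : ∑ j ∈ Finset.Icc i t, f j = ∑ j ∈ Finset.Icc 1 t, f j := by
      apply Finset.sum_subset (Finset.Icc_subset_Icc_left hi1)
      intro x hx hx'
      rw [Finset.mem_Icc] at hx hx'
      simp only [hf]
      rw [hlt x hx.1 (by omega)]; ring
    rw [← this]; exact h
  · have h := (hb (t - 1) 1 le_rfl (by omega)).2.1
    simpa [hr0] using h
end

section
/- Every integer n with 0 ≤ n < p has a representation n = R(z) for some tuple z ∈ 𝒵. -/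
def RepA (t : ℕ) (r Z : ℕ → ℤ) (m : ℕ) : Prop :=
  ∀ n : ℤ, 0 ≤ n → n < r m →
    ∃ z : ℕ → ℤ,
      (∀ i, m + 1 ≤ i → i ≤ t → 0 ≤ z i ∧ z i ≤ Z i) ∧
      z t ≤ Z t - 1 ∧
      ((∀ i, m + 1 ≤ i → i ≤ t → z i = 0) ∨
        (∃ i, m + 1 ≤ i ∧ i ≤ t ∧ 0 < z i ∧ Odd (i + m) ∧
          ∀ j, m + 1 ≤ j → j < i → z j = 0)) ∧
      (-1 : ℤ) ^ m * n = ∑ i ∈ Finset.Icc (m + 1) t, z i * (-1 : ℤ) ^ (i - 1) * r i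

theorem sum_peel (f : ℕ → ℤ) (m t : ℕ) (h : m + 1 ≤ t) :
    ∑ i ∈ Finset.Icc (m + 1) t, f i = f (m + 1) + ∑ i ∈ Finset.Icc (m + 2) t, f i := by
  have : Finset.Icc (m + 1) t = insert (m + 1) (Finset.Icc (m + 2) t) := by
    ext x; simp only [Finset.mem_Icc, Finset.mem_insert]; omega
  rw [this, Finset.sum_insert (by simp)]

theorem repA_step (t : ℕ) (r Z : ℕ → ℤ)
    (hZ : ∀ i, 1 ≤ i → i ≤ t → 1 ≤ Z i) (m : ℕ) (hm : m + 2 ≤ t)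
    (hpos : 0 < r (m + 1))
    (hrec : r m = Z (m + 1) * r (m + 1) + r (m + 2))
    (h1 : RepA t r Z (m + 1)) (h2 : RepA t r Z (m + 2)) : RepA t r Z m := by
  intro n hn0 hn
  rcases hn0.eq_or_lt with rfl | hn0
  · refine ⟨fun _ => 0, ?_, ?_, Or.inl (fun _ _ _ => rfl), by simp⟩
    · intro i hi hit
      have := hZ i (by omega) hit
      exact ⟨le_rfl, by simp only; omega⟩
    · have := hZ t (by omega) le_rfl
      simp only; omega
  have hZm := hZ (m + 1) (by omega) (by omega)
  by_cases hc : n ≤ Z (m + 1) * r (m + 1)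
  · obtain ⟨q, c, hq1, hc0, hcr, hqc⟩ : ∃ q c : ℤ, 0 < q ∧ 0 ≤ c ∧ c < r (m + 1) ∧
        n = q * r (m + 1) - c := by
      refine ⟨(n - 1) / r (m + 1) + 1, r (m + 1) - 1 - (n - 1) % r (m + 1), ?_, ?_, ?_, ?_⟩
      · have := Int.ediv_nonneg (show 0 ≤ n - 1 by omega) hpos.le
        omega
      · have := Int.emod_lt_of_pos (n - 1) hpos
        omega
      · have := Int.emod_nonneg (n - 1) hpos.ne'
        omega
      · have := Int.mul_ediv_add_emod (n - 1) (r (m + 1))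
        linarith
    have hqZ : q ≤ Z (m + 1) := by
      by_contra! hcon
      nlinarith
    obtain ⟨z, hz1, hz2, -, hz4⟩ := h1 c hc0 hcr
    refine ⟨fun i => if i = m + 1 then q else z i, ?_, ?_, Or.inr ⟨m + 1, le_rfl, by omega, ?_, ?_, ?_⟩, ?_⟩
    · intro i hi hit
      by_cases h : i = m + 1
      · subst h; simp; omega
      · simp only [h, if_false]; exact hz1 i (by omega) hit
    · have h : t ≠ m + 1 := by omega
      simp only [h, if_false]; exact hz2
    · simpa using hq1
    · exact ⟨m, by ring⟩
    · intro j _ _; omega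
    · rw [sum_peel _ _ _ (by omega)]
      rw [Finset.sum_congr rfl (g := fun i => z i * (-1 : ℤ) ^ (i - 1) * r i), ← hz4, hqc]
      · simp; ring
      · intro i hi
        rw [Finset.mem_Icc] at hi
        have h : i ≠ m + 1 := by omega
        simp only [h, if_false]
  · push Not at hc
    obtain ⟨z, hz1, hz2, -, hz4⟩ := h2 (n - Z (m + 1) * r (m + 1)) (by omega) (by omega)
    refine ⟨fun i => if i = m + 1 then Z (m + 1) else if i = m + 2 then 0 else z i, ?_, ?_,
      Or.inr ⟨m + 1, le_rfl, by omega, ?_, ?_, ?_⟩, ?_⟩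
    · intro i hi hit
      by_cases h : i = m + 1
      · subst h; simp; omega
      · by_cases h' : i = m + 2
        · have := hZ i (by omega) hit
          subst h'; simp; omega
        · simp only [h, h', if_false]; exact hz1 i (by omega) hit
    · have h : t ≠ m + 1 := by omega
      have := hZ t (by omega) le_rfl
      simp only [h, if_false]
      split_ifs
      · omega
      · exact hz2
    · simp; omega
    · exact ⟨m, by ring⟩
    · intro j _ _; omega
    · rw [sum_peel _ _ _ (by omega), sum_peel _ _ _ (by omega)]
      rw [Finset.sum_congr rfl (g := fun i => z i * (-1 : ℤ) ^ (i - 1) * r i), ← hz4]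
      · simp; ring
      · intro i hi
        rw [Finset.mem_Icc] at hi
        have h : i ≠ m + 1 := by omega
        have h' : i ≠ m + 2 := by omega
        simp only [h, h', if_false]

/-- Lemma 4: every integer `n` with `0 ≤ n < p` has a representation `n = R(z)`
for some tuple `z ∈ 𝒵`. -/
theorem stmt_4 (p u : ℤ) (hp : 3 ≤ p) (hpu : IsCoprime u p)
    (t : ℕ) (ht : 1 ≤ t) (r Z : ℕ → ℤ)
    (hr0 : r 0 = p) (hr1pos : 0 < r 1) (hr1lt : r 1 < p) (hur1 : (u * r 1) % p = 1)
    (hrec : ∀ i, 1 ≤ i → i ≤ t →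
      r (i - 1) = Z i * r i + r (i + 1) ∧ 0 ≤ r (i + 1) ∧ r (i + 1) < r i)
    (hrt : r t = 1) :
    ∀ n : ℤ, 0 ≤ n → n < p →
      ∃ z : ℕ → ℤ,
        (∀ i, 1 ≤ i → i ≤ t → 0 ≤ z i ∧ z i ≤ Z i) ∧
        z t ≤ Z t - 1 ∧
        ((∀ i, 1 ≤ i → i ≤ t → z i = 0) ∨
          (∃ i, 1 ≤ i ∧ i ≤ t ∧ 0 < z i ∧ Odd i ∧ ∀ j, 1 ≤ j → j < i → z j = 0)) ∧
        n = ∑ i ∈ Finset.Icc 1 t, z i * (-1 : ℤ) ^ (i - 1) * r i := by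
  have hpos : ∀ i, 1 ≤ i → i ≤ t → 0 < r i := fun i h1 h2 => by
    have := hrec i h1 h2; omega
  have hdec : ∀ i, i ≤ t → r (i + 1) < r i := by
    intro i hi
    rcases Nat.eq_zero_or_pos i with rfl | h
    · simpa [hr0] using hr1lt
    · exact (hrec i h hi).2.2
  have hZ : ∀ i, 1 ≤ i → i ≤ t → 1 ≤ Z i := by
    intro i h1 h2
    obtain ⟨a, b, c⟩ := hrec i h1 h2
    have h3 := hpos i h1 h2
    have h4 := hdec (i - 1) (by omega)
    rw [Nat.sub_add_cancel h1] at h4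
    by_contra! hcon
    nlinarith
  have key : ∀ d, d + 1 ≤ t → RepA t r Z (t - d) ∧ RepA t r Z (t - d - 1) := by
    intro d
    induction d with
    | zero =>
      intro _
      refine ⟨?_, ?_⟩
      · intro n h0 h1
        have : n = 0 := by simp only [Nat.sub_zero, hrt] at h1; omega
        subst this
        have := hZ t ht le_rfl
        exact ⟨fun _ => 0, fun i _ _ => by omega, by simp only; omega,
          Or.inl (fun _ _ _ => rfl), by simp⟩
      · intro n h0 h1
        obtain ⟨a, b, c⟩ := hrec t ht le_rfl
        obtain ⟨s, rfl⟩ : ∃ s, t = s + 1 := ⟨t - 1, by omega⟩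
        simp only [Nat.sub_zero, Nat.add_sub_cancel] at h1 a ⊢
        rw [hrt] at a c
        have hi : ∀ i, s + 1 ≤ i → i ≤ s + 1 → i = s + 1 := fun i _ _ => by omega
        refine ⟨fun _ => n, ?_, by simp only; omega, ?_, ?_⟩
        · intro i h2 h3
          rw [hi i h2 h3]
          simp only; omega
        · rcases h0.eq_or_lt with h | h
          · exact Or.inl fun _ _ _ => h.symm
          · exact Or.inr ⟨s + 1, le_rfl, le_rfl, h, ⟨s, by ring⟩, fun j _ _ => by omega⟩
        · simp [hrt]; ring
    | succ d ih =>
      intro hd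
      obtain ⟨h2, h1⟩ := ih (by omega)
      obtain ⟨m, hm⟩ : ∃ m, t = m + d + 2 := ⟨t - d - 2, by omega⟩
      have e1 : t - d = m + 2 := by omega
      have e2 : t - d - 1 = m + 1 := by omega
      have e3 : t - (d + 1) = m + 1 := by omega
      have e4 : t - (d + 1) - 1 = m := by omega
      rw [e1] at h2
      rw [e2] at h1
      rw [e4, e3]
      refine ⟨h1, repA_step t r Z hZ m (by omega) (hpos _ (by omega) (by omega)) ?_ h1 h2⟩
      have := (hrec (m + 1) (by omega) (by omega)).1
      simpa using this
  intro n h0 h1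
  have h := (key (t - 1) (by omega)).2
  have e : t - (t - 1) - 1 = 0 := by omega
  rw [e] at h
  obtain ⟨z, a, b, c, d⟩ := h n h0 (by rw [hr0]; exact h1)
  exact ⟨z, by simpa using a, b, by simpa using c, by simpa using d⟩
end

section
/- For every tuple z = (z₁,...,z_t) ∈ 𝒵, the least nonnegative residue of u·R(z) modulo p equals Σ_{1≤i≤t} z_i·s_i, i.e. ⟨u·Σ_{1≤i≤t} z_i·(−1)^{i−1}·r_i⟩_p = Σ_{1≤i≤t} z_i·s_i. -/
/-- Lemma 7: for every tuple `z ∈ 𝒵`,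
`⟨u·Σ_{1≤i≤t} z_i·(-1)^{i-1}·r_i⟩_p = Σ_{1≤i≤t} z_i·s_i`. -/
theorem stmt_7 (p u : ℤ) (hp : 3 ≤ p) (hpu : IsCoprime u p)
    (t : ℕ) (ht : 1 ≤ t) (r Z : ℕ → ℤ)
    (hr0 : r 0 = p) (hr1pos : 0 < r 1) (hr1lt : r 1 < p) (hur1 : (u * r 1) % p = 1)
    (hrec : ∀ i, 1 ≤ i → i ≤ t →
      r (i - 1) = Z i * r i + r (i + 1) ∧ 0 ≤ r (i + 1) ∧ r (i + 1) < r i)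
    (hrt : r t = 1)
    (s : ℕ → ℤ) (hs0 : s 0 = 0) (hs1 : s 1 = 1)
    (hsrec : ∀ i, 1 ≤ i → i ≤ t → s (i + 1) = Z i * s i + s (i - 1)) :
    ∀ z : ℕ → ℤ,
      (∀ i, 1 ≤ i → i ≤ t → 0 ≤ z i ∧ z i ≤ Z i) →
      z t ≤ Z t - 1 →
      ((∀ i, 1 ≤ i → i ≤ t → z i = 0) ∨
        (∃ i, 1 ≤ i ∧ i ≤ t ∧ 0 < z i ∧ Odd i ∧ ∀ j, 1 ≤ j → j < i → z j = 0)) →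
      (u * ∑ i ∈ Finset.Icc 1 t, z i * (-1 : ℤ) ^ (i - 1) * r i) % p =
        ∑ i ∈ Finset.Icc 1 t, z i * s i := by
  intro z hz hzt _
  have key : ∀ k, k ≤ t → 0 ≤ s k ∧ 0 ≤ s (k + 1) ∧ r k * s (k + 1) + r (k + 1) * s k = p ∧
      p ∣ u * (-1) ^ k * r (k + 1) - s (k + 1) ∧ p ∣ u * (-1) ^ k * r k + s k ∧
      0 ≤ ∑ i ∈ Finset.Icc 1 k, z i * s i ∧
      ∑ i ∈ Finset.Icc 1 k, z i * s i ≤ s (k + 1) + s k - 1 ∧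
      p ∣ u * (∑ i ∈ Finset.Icc 1 k, z i * (-1 : ℤ) ^ (i - 1) * r i)
        - ∑ i ∈ Finset.Icc 1 k, z i * s i := by
    intro k
    induction k with
    | zero =>
      intro _
      have h : p ∣ u * r 1 - 1 := by
        have := Int.dvd_self_sub_emod (x := u * r 1) (m := p)
        rwa [hur1] at this
      simp [hs0, hs1, hr0, h]
    | succ k ih =>
      intro hk
      obtain ⟨h1, h2, h3, ⟨a, hA⟩, ⟨b, hB⟩, h6, h7, ⟨c, hC⟩⟩ := ih (by omega)
      obtain ⟨e1, e2, e3⟩ := hrec (k + 1) (by omega) hk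
      have e4 := hsrec (k + 1) (by omega) hk
      obtain ⟨z0, z1⟩ := hz (k + 1) (by omega) hk
      simp only [Nat.add_sub_cancel] at e1 e4
      have q1 := mul_nonneg z0 h2
      have q2 := mul_le_mul_of_nonneg_right z1 h2
      rw [Finset.sum_Icc_succ_top (by omega), Finset.sum_Icc_succ_top (by omega)]
      simp only [Nat.add_sub_cancel]
      refine ⟨h2, by linarith, ?_, ⟨Z (k + 1) * a - b, ?_⟩, ⟨-a, ?_⟩, by linarith, by linarith,
        ⟨c + z (k + 1) * a, ?_⟩⟩
      · rw [e4, ← h3, e1]; ring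
      · have : r (k + 1 + 1) = r k - Z (k + 1) * r (k + 1) := by linarith
        rw [this, e4, pow_succ]
        linear_combination Z (k + 1) * hA - hB
      · rw [pow_succ]; linear_combination -hA
      · linear_combination hC + z (k + 1) * hA
  obtain ⟨_, _, h3, _, _, h6, _, h8⟩ := key t le_rfl
  obtain ⟨_, e2, e3⟩ := hrec t ht le_rfl
  have hlt : ∑ i ∈ Finset.Icc 1 t, z i * s i < p := by
    have h0 : r (t + 1) = 0 := by omega
    rw [h0, hrt] at h3
    obtain ⟨m, rfl⟩ : ∃ m, t = m + 1 := ⟨t - 1, by omega⟩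
    obtain ⟨_, g2, _, _, _, _, g7, _⟩ := key m (by omega)
    have e4 := hsrec (m + 1) (by omega) le_rfl
    simp only [Nat.add_sub_cancel] at e4
    rw [Finset.sum_Icc_succ_top (by omega)]
    have q2 := mul_le_mul_of_nonneg_right hzt g2
    linarith
  rw [← Int.emod_eq_of_lt h6 hlt]
  exact Int.emod_eq_emod_iff_emod_sub_eq_zero.mpr (Int.emod_eq_zero_of_dvd h8)
end

section
/- Let a = p − r_{2k} + z·r_{2k+1} with 2k+1 ≤ t and 0 ≤ z ≤ Z_{2k+1} − 1. Then ⟨ua⟩_p < min_{a<n<p} ⟨un⟩_p; consequently r_{2k} − z·r_{2k+1} ∈ D_Δ(p,u). -/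
/-- Lemma 8: for `a = p - r_{2k} + z·r_{2k+1}` with `2k+1 ≤ t` and `0 ≤ z ≤ Z_{2k+1}-1`,
we have `⟨ua⟩_p < min_{a<n<p} ⟨un⟩_p`, whence `r_{2k} - z·r_{2k+1} ∈ D_Δ(p,u)`. -/
theorem stmt_8 (p u : ℤ) (hp : 3 ≤ p) (hpu : IsCoprime u p)
    (t : ℕ) (ht : 1 ≤ t) (r Z : ℕ → ℤ)
    (hr0 : r 0 = p) (hr1pos : 0 < r 1) (hr1lt : r 1 < p) (hur1 : (u * r 1) % p = 1)
    (hrec : ∀ i, 1 ≤ i → i ≤ t →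
      r (i - 1) = Z i * r i + r (i + 1) ∧ 0 ≤ r (i + 1) ∧ r (i + 1) < r i)
    (hrt : r t = 1)
    (k : ℕ) (hk : 2 * k + 1 ≤ t) (z : ℤ) (hz0 : 0 ≤ z) (hz1 : z ≤ Z (2 * k + 1) - 1)
    (a : ℤ) (ha : a = p - r (2 * k) + z * r (2 * k + 1)) :
    (∀ n : ℤ, a < n → n < p → (u * a) % p < (u * n) % p) ∧
    r (2 * k) - z * r (2 * k + 1) ∈
      {d : ℤ | ∃ a' b' : ℤ, (a' < b' ∧ ∀ n : ℤ, a' < n → n < b' →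
          max ((u * a') % p) ((u * b') % p) < (u * n) % p) ∧ d = b' - a'} := by
  have key : ∀ j : ℕ, j + 1 ≤ t → ∃ s s' : ℤ, 0 ≤ s ∧ 1 ≤ s' ∧ s' * r j + s * r (j + 1) = p ∧
      p ∣ u * r (j + 1) - (-1) ^ j * s' ∧ p ∣ u * r j + (-1) ^ j * s ∧ 
      0 < r (j + 1) ∧ r (j + 1) < r j := by
    intro j
    induction j with
    | zero =>
      intro _
      refine ⟨0, 1, le_refl _, le_refl _, by simp [hr0], ?_, ?_, hr1pos, by simpa [hr0] using hr1lt⟩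
      · have := Int.dvd_self_sub_emod (x := u * r 1) (m := p)
        rw [hur1] at this
        simpa using this
      · simp [hr0]
    | succ j ih =>
      intro hj
      obtain ⟨s, s', hs, hs', hsum, ⟨c, hc⟩, ⟨d, hd⟩, hpos, hlt⟩ := ih (by omega)
      obtain ⟨h1, h2, h3⟩ := hrec (j + 1) (by omega) (by omega)
      obtain ⟨_, h5, h6⟩ := hrec (j + 2) (by omega) (by omega)
      simp only [Nat.add_sub_cancel] at h1
      have hZ : 0 < Z (j + 1) := by
        by_contra hcon
        have : Z (j + 1) * r (j + 1) ≤ 0 := mul_nonpos_of_nonpos_of_nonneg (by omega) hpos.le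
        have h3' : r (j + 1 + 1) < r (j + 1) := h3
        linarith
      refine ⟨s', Z (j + 1) * s' + s, by omega, by nlinarith, ?_, ?_, ?_, lt_of_le_of_lt h5 h6, h3⟩
      · rw [← hsum, h1]; ring
      · refine ⟨d - Z (j + 1) * c, ?_⟩
        rw [h1] at hd
        rw [pow_succ]
        linear_combination hd - Z (j + 1) * hc
      · refine ⟨c, ?_⟩
        rw [pow_succ]
        linear_combination hc
  obtain ⟨s, s', hs, hs', hsum, ⟨c, hc⟩, ⟨d, hd⟩, hpos, hlt⟩ := key (2 * k) hk
  obtain ⟨h1, h2, h3⟩ := hrec (2 * k + 1) (by omega) hk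
  simp only [Nat.add_sub_cancel] at h1
  rw [pow_mul] at hc hd
  norm_num at hc hd
  generalize r (2 * k) = x at *
  generalize r (2 * k + 1) = y at *
  have hR : 0 < x - z * y := by nlinarith
  have hS0 : 0 ≤ s + z * s' := by positivity
  have hdet : s' * (x - z * y) + (s + z * s') * y = p := by rw [← hsum]; ring
  have hSp : s + z * s' < p := by nlinarith [mul_pos (by omega : 0 < s') hR]
  have hua : (u * a) % p = s + z * s' := by
    have : u * a = (s + z * s') + p * (u - d + z * c) := by
      rw [ha]; linear_combination z * hc - hd
    rw [this, Int.add_mul_emod_self_left]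
    exact Int.emod_eq_of_lt hS0 hSp
  have main : ∀ n : ℤ, a < n → n < p → (u * a) % p < (u * n) % p := by
    intro n han hnp
    rw [hua]
    by_contra hcon
    push Not at hcon
    have hN0 : 0 ≤ (u * n) % p := Int.emod_nonneg _ (by omega)
    have hNe := Int.emod_add_mul_ediv (u * n) p
    generalize (u * n) % p = N at *
    generalize (u * n) / p = q at *
    have e : (p - n) * s' + N * y = p * (s' - q * y + n * c) := by
      linear_combination y * hNe + n * hc
    have l1 : 0 < (p - n) * s' + N * y := by
      have : 0 < (p - n) * s' := mul_pos (by omega) (by omega)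
      have : 0 ≤ N * y := mul_nonneg hN0 hpos.le
      omega
    have l2 : (p - n) * s' + N * y < p := by
      have : (p - n) * s' < (x - z * y) * s' := mul_lt_mul_of_pos_right (by linarith) (by omega)
      have : N * y ≤ (s + z * s') * y := mul_le_mul_of_nonneg_right hcon hpos.le
      linarith
    have := Int.le_of_dvd l1 ⟨_, e⟩
    omega
  refine ⟨main, a, p, ⟨by linarith, ?_⟩, by rw [ha]; ring⟩
  intro n h h'
  have h0 : (u * p) % p = 0 := Int.mul_emod_left u p
  rw [h0, max_eq_left (by rw [hua]; exact hS0)]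
  exact main n h h'
end

section
/- Let b = r_{2k−1} − z·r_{2k} with 2k ≤ t and 0 ≤ z ≤ Z_{2k} − 1. Then ⟨ub⟩_p < min_{0<n<b} ⟨un⟩_p; consequently r_{2k−1} − z·r_{2k} ∈ D_Δ(p,u). -/
/-- Lemma 9: for `b = r_{2k-1} - z·r_{2k}` with `2k ≤ t` and `0 ≤ z ≤ Z_{2k}-1`,
we have `⟨ub⟩_p < min_{0<n<b} ⟨un⟩_p`, whence `r_{2k-1} - z·r_{2k} ∈ D_Δ(p,u)`. -/
theorem stmt_9 (p u : ℤ) (hp : 3 ≤ p) (hpu : IsCoprime u p)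
    (t : ℕ) (ht : 1 ≤ t) (r Z : ℕ → ℤ)
    (hr0 : r 0 = p) (hr1pos : 0 < r 1) (hr1lt : r 1 < p) (hur1 : (u * r 1) % p = 1)
    (hrec : ∀ i, 1 ≤ i → i ≤ t →
      r (i - 1) = Z i * r i + r (i + 1) ∧ 0 ≤ r (i + 1) ∧ r (i + 1) < r i)
    (hrt : r t = 1)
    (k : ℕ) (hk1 : 1 ≤ k) (hk : 2 * k ≤ t) (z : ℤ) (hz0 : 0 ≤ z) (hz1 : z ≤ Z (2 * k) - 1)
    (b : ℤ) (hb : b = r (2 * k - 1) - z * r (2 * k)) :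
    (∀ n : ℤ, 0 < n → n < b → (u * b) % p < (u * n) % p) ∧
    r (2 * k - 1) - z * r (2 * k) ∈
      {d : ℤ | ∃ a' b' : ℤ, (a' < b' ∧ ∀ n : ℤ, a' < n → n < b' →
          max ((u * a') % p) ((u * b') % p) < (u * n) % p) ∧ d = b' - a'} := by
  have hlt : ∀ i, 1 ≤ i → i ≤ t → r i < r (i - 1) := by
    intro i h1 h2
    rcases Nat.lt_or_ge 1 i with h | h
    · obtain ⟨_, _, h3⟩ := hrec (i - 1) (by omega) (by omega)
      rwa [Nat.sub_add_cancel h1] at h3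
    · have : i = 1 := by omega
      subst this
      simpa [hr0] using hr1lt
  have hZ : ∀ i, 1 ≤ i → i ≤ t → 0 < Z i := by
    intro i h1 h2
    obtain ⟨h3, h4, h5⟩ := hrec i h1 h2
    have h6 := hlt i h1 h2
    have h7 : 0 < Z i * r i := by linarith
    exact pos_of_mul_pos_left h7 (by linarith)
  have key : ∀ j : ℕ, j + 1 ≤ t → ∃ s s' : ℤ, 0 ≤ s ∧ 0 < s' ∧ r j * s' + r (j + 1) * s = p ∧
      p ∣ u * r j + (-1) ^ j * s ∧ p ∣ u * r (j + 1) - (-1) ^ j * s' := by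
    intro j
    induction j with
    | zero =>
      intro _
      refine ⟨0, 1, le_refl _, one_pos, by simp [hr0], by simp [hr0], ?_⟩
      have := Int.dvd_self_sub_of_emod_eq hur1
      simpa using this
    | succ j ih =>
      intro hj
      obtain ⟨s, s', hs, hs', h1, h2, h3⟩ := ih (by omega)
      obtain ⟨h4, _, _⟩ := hrec (j + 1) (by omega) (by omega)
      have h5 := hZ (j + 1) (by omega) (by omega)
      simp only [Nat.add_sub_cancel] at h4
      have h6 : r (j + 1 + 1) = r j - Z (j + 1) * r (j + 1) := by linarith
      refine ⟨s', Z (j + 1) * s' + s, hs'.le, by positivity, ?_, ?_, ?_⟩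
      · rw [h6, ← h1]; ring
      · convert h3 using 1
        ring
      · rw [h6]
        convert Int.dvd_sub h2 (Dvd.dvd.mul_left h3 (Z (j + 1))) using 1
        ring
  obtain ⟨s, T, hs, hT, h1, h2, h3⟩ := key (2 * k - 1) (by omega)
  have hodd : (-1 : ℤ) ^ (2 * k - 1) = -1 := Odd.neg_one_pow ⟨k - 1, by omega⟩
  obtain ⟨h4, h5, h6⟩ := hrec (2 * k) (by omega) hk
  have hkk : 2 * k - 1 + 1 = 2 * k := by omega
  rw [hkk] at h1 h3
  rw [hodd] at h2 h3
  have hR : 0 < r (2 * k) := by linarith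
  have hbpos : 0 < b := by nlinarith
  obtain ⟨S, hS⟩ : ∃ S, S = s + z * T := ⟨_, rfl⟩
  have hS0 : 0 ≤ S := by rw [hS]; positivity
  have hdet : b * T + S * r (2 * k) = p := by rw [hb, hS, ← h1]; ring
  have hSp : S < p := by nlinarith [mul_pos hbpos hT]
  have hbS : (u * b) % p = S := by
    have hd : p ∣ u * b - S := by
      convert Int.dvd_sub h2 (h3.mul_left z) using 1
      rw [hb, hS]; ring
    rw [Int.emod_eq_emod_iff_emod_sub_eq_zero.mpr (Int.emod_eq_zero_of_dvd hd)]
    exact Int.emod_eq_of_lt hS0 hSp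
  have main : ∀ n : ℤ, 0 < n → n < b → (u * b) % p < (u * n) % p := by
    intro n hn hnb
    rw [hbS]
    by_contra hcon
    push Not at hcon
    have hm0 : 0 ≤ (u * n) % p := Int.emod_nonneg _ (by omega)
    have hm : p ∣ u * n - (u * n) % p := Int.dvd_self_sub_emod
    generalize (u * n) % p = m at *
    have hd : p ∣ n * T + m * r (2 * k) := by
      convert Int.dvd_sub (h3.mul_left n) (hm.mul_left (r (2 * k))) using 1
      ring
    have hle := Int.le_of_dvd (by positivity) hd
    nlinarith [mul_lt_mul_of_pos_right hnb hT, mul_le_mul_of_nonneg_right hcon hR.le]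
  refine ⟨main, 0, b, ⟨hbpos, fun n h h' => ?_⟩, by rw [hb]; ring⟩
  have := main n h h'
  rw [mul_zero, Int.zero_emod, hbS, max_eq_right hS0]
  rwa [hbS] at this
end

section
/- (Theorem 1(i)) If q ≠ p + 1, then S_Δ(p,q) = N_Δ(p,q). If q = p + 1, then S_Δ(p,q) = N_Δ(p,q) ∪ {2} and 2 ∉ N_Δ(p,q). -/
lemma enum_aux (P : ℤ → Prop) (a b : ℕ) (f : ℕ → ℤ)
    (mem : ∀ j, a ≤ j → j ≤ b → P (f j))
    (surj : ∀ m, P m → ∃ j, a ≤ j ∧ j ≤ b ∧ f j = m)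
    (mono : ∀ i j, a ≤ i → i < j → j ≤ b → f i < f j) (d : ℤ) :
    (∃ j, a ≤ j ∧ j < b ∧ d = f (j+1) - f j) ↔
    ∃ x y, P x ∧ P y ∧ x < y ∧ (∀ z, x < z → z < y → ¬ P z) ∧ d = y - x := by
  have mono' : ∀ i j, a ≤ i → a ≤ j → i ≤ b → j ≤ b → f i < f j → i < j := by
    intro i j hi hj hib hjb h
    by_contra hc
    rcases Nat.lt_or_eq_of_le (Nat.le_of_not_lt hc) with h1 | h1
    · have := mono j i hj h1 hib
      omega
    · subst h1; omega
  constructor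
  · rintro ⟨j, h1, h2, rfl⟩
    refine ⟨f j, f (j+1), mem j h1 h2.le, mem _ (by omega) (by omega),
      mono _ _ h1 (by omega) (by omega), ?_, rfl⟩
    intro z hz1 hz2 hz
    obtain ⟨k, hk1, hk2, rfl⟩ := surj z hz
    have := mono' _ _ h1 hk1 (by omega) hk2 hz1
    have := mono' _ _ hk1 (by omega) hk2 (by omega) hz2
    omega
  · rintro ⟨x, y, hx, hy, hxy, hb, rfl⟩
    obtain ⟨i, hi1, hi2, rfl⟩ := surj x hx
    obtain ⟨k, hk1, hk2, rfl⟩ := surj y hy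
    have hik := mono' _ _ hi1 hk1 hi2 hk2 hxy
    have : k = i + 1 := by
      by_contra hne
      exact hb (f (i+1)) (mono _ _ hi1 (by omega) (by omega))
        (mono _ _ (by omega) (by omega) hk2) (mem _ (by omega) (by omega))
    subst this
    exact ⟨i, hi1, by omega, rfl⟩

lemma sym_aux (p q : ℤ) (hp : 3 ≤ p) (hpq : p < q) (hcop : IsCoprime p q) (m : ℤ) :
    (¬ ∃ a b : ℤ, 0 ≤ a ∧ 0 ≤ b ∧ m = a * q + b * p) ↔
    (∃ a b : ℤ, 0 ≤ a ∧ 0 ≤ b ∧ (p * q - p - q - m) = a * q + b * p) := by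
  constructor
  · intro h
    obtain ⟨u, v, huv⟩ := hcop
    have h1 := Int.emod_add_mul_ediv (m * v) p
    have h2 := Int.emod_nonneg (m * v) (b := p) (by omega)
    have h3 := Int.emod_lt_of_pos (m * v) (b := p) (by omega)
    set r := (m * v) % p
    set s := (m * v) / p
    have hm : m = r * q + (m * u + s * q) * p := by
      linear_combination (-m) * huv - q * h1
    refine ⟨p - 1 - r, -1 - (m * u + s * q), by omega, ?_, ?_⟩
    · by_contra hc
      exact h ⟨r, m * u + s * q, h2, by omega, hm⟩
    · linear_combination (-1) * hm
  · rintro ⟨a, b, ha, hb, h⟩ ⟨c, d, hc, hd, h'⟩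
    have e : p * q = (a + c + 1) * q + (b + d + 1) * p := by
      linear_combination h + h'
    have d1 : p ∣ a + c + 1 := by
      apply hcop.dvd_of_dvd_mul_right
      exact ⟨q - (b + d + 1), by linear_combination -e⟩
    have := Int.le_of_dvd (by omega) d1
    nlinarith [mul_le_mul_of_nonneg_right this (by omega : 0 ≤ q),
      mul_pos (by omega : 0 < b + d + 1) (by omega : 0 < p)]


/-- Theorem 1(i): unless `q = p + 1` we have `S_Δ(p,q) = N_Δ(p,q)`; for `q = p + 1`
we have `S_Δ(p,q) = N_Δ(p,q) ∪ {2}` and `2 ∉ N_Δ(p,q)`.  Here `ℓ₀ < ℓ₁ < ⋯ < ℓ_θ`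
enumerates `S(p,q) = ⟨p,q⟩ ∩ [0,(p-1)(q-1)]`, `n₁ < ⋯ < n_θ` enumerates the positive
integers not in `⟨p,q⟩`, `S_Δ = {ℓ_{j+1} - ℓ_j}` and `N_Δ = {n_{j+1} - n_j}`. -/
theorem stmt_12 (p q : ℤ) (hp : 3 ≤ p) (hpq : p < q) (hcop : IsCoprime p q)
    (θ : ℕ) (hθ : (θ : ℤ) * 2 = (p - 1) * (q - 1))
    (ℓ : ℕ → ℤ)
    (hℓmem : ∀ j : ℕ, j ≤ θ →
      (∃ a b : ℤ, 0 ≤ a ∧ 0 ≤ b ∧ ℓ j = a * q + b * p) ∧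
      0 ≤ ℓ j ∧ ℓ j ≤ (p - 1) * (q - 1))
    (hℓsurj : ∀ m : ℤ, (∃ a b : ℤ, 0 ≤ a ∧ 0 ≤ b ∧ m = a * q + b * p) →
      0 ≤ m → m ≤ (p - 1) * (q - 1) → ∃ j : ℕ, j ≤ θ ∧ ℓ j = m)
    (hℓmono : ∀ i j : ℕ, i < j → j ≤ θ → ℓ i < ℓ j)
    (nn : ℕ → ℤ)
    (hnmem : ∀ j : ℕ, 1 ≤ j → j ≤ θ →
      0 < nn j ∧ ¬ (∃ a b : ℤ, 0 ≤ a ∧ 0 ≤ b ∧ nn j = a * q + b * p))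
    (hnsurj : ∀ m : ℤ, 0 < m → ¬ (∃ a b : ℤ, 0 ≤ a ∧ 0 ≤ b ∧ m = a * q + b * p) →
      ∃ j : ℕ, 1 ≤ j ∧ j ≤ θ ∧ nn j = m)
    (hnmono : ∀ i j : ℕ, 1 ≤ i → i < j → j ≤ θ → nn i < nn j) :
    (q ≠ p + 1 →
      {d : ℤ | ∃ j : ℕ, j < θ ∧ d = ℓ (j + 1) - ℓ j} =
      {d : ℤ | ∃ j : ℕ, 1 ≤ j ∧ j < θ ∧ d = nn (j + 1) - nn j}) ∧
    (q = p + 1 →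
      {d : ℤ | ∃ j : ℕ, j < θ ∧ d = ℓ (j + 1) - ℓ j} =
      {d : ℤ | ∃ j : ℕ, 1 ≤ j ∧ j < θ ∧ d = nn (j + 1) - nn j} ∪ {2} ∧
      (2 : ℤ) ∉ {d : ℤ | ∃ j : ℕ, 1 ≤ j ∧ j < θ ∧ d = nn (j + 1) - nn j}) := by
  obtain ⟨G, hG⟩ : ∃ G : ℤ → Prop, ∀ m, G m ↔ ∃ a b : ℤ, 0 ≤ a ∧ 0 ≤ b ∧ m = a * q + b * p :=
    ⟨_, fun _ => Iff.rfl⟩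
  have sym : ∀ m, ¬ G m ↔ G (p * q - p - q - m) := by
    intro m
    rw [hG, hG]
    exact sym_aux p q hp hpq hcop m
  simp only [← hG] at hℓmem hℓsurj hnmem hnsurj
  have hφ : (p - 1) * (q - 1) = p * q - p - q + 1 := by ring
  simp only [hφ] at hℓmem hℓsurj
  obtain ⟨F, hF⟩ : ∃ F, F = p * q - p - q := ⟨_, rfl⟩
  simp only [← hF] at hℓmem hℓsurj sym
  have G0 : G 0 := (hG 0).2 ⟨0, 0, le_rfl, le_rfl, by ring⟩
  have Gnn : ∀ m, G m → 0 ≤ m := by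
    intro m hm
    obtain ⟨a, b, ha, hb, rfl⟩ := (hG m).1 hm
    have : 0 ≤ q := by omega
    have : 0 ≤ p := by omega
    positivity
  have Gsmall : ∀ m, G m → 0 < m → m < q → m < 2 * p → m = p := by
    intro m hm h0 hq h2
    obtain ⟨a, b, ha, hb, rfl⟩ := (hG m).1 hm
    have ha0 : a = 0 := by
      by_contra hne
      have : 1 ≤ a := by omega
      nlinarith [mul_nonneg hb (by omega : 0 ≤ p)]
    subst ha0
    have hb1 : b < 2 := by
      by_contra hne
      have : 2 ≤ b := by omega
      nlinarith
    have hb0 : 0 < b := by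
      by_contra hne
      have : b = 0 := by omega
      subst this
      simp at h0
    have : b = 1 := by omega
    subst this; ring
  have n1 : ¬ G 1 := by
    intro h
    have := Gsmall 1 h (by omega) (by omega) (by omega)
    omega
  have GF1 : G (F - 1) := (sym 1).1 n1
  have GF : ¬ G F := (sym F).2 (by simpa using G0)
  have Gφ : G (F + 1) := by
    by_contra h
    have := Gnn _ ((sym _).1 h)
    omega
  have F1 := Gnn _ GF1
  have hS : ∀ d, d ∈ {d : ℤ | ∃ j : ℕ, j < θ ∧ d = ℓ (j + 1) - ℓ j} ↔
      ∃ x y, (G x ∧ 0 ≤ x ∧ x ≤ F + 1) ∧ (G y ∧ 0 ≤ y ∧ y ≤ F + 1) ∧ x < y ∧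
        (∀ z, x < z → z < y → ¬ (G z ∧ 0 ≤ z ∧ z ≤ F + 1)) ∧ d = y - x := by
    intro d
    rw [← enum_aux (fun x => G x ∧ 0 ≤ x ∧ x ≤ F + 1) 0 θ ℓ (fun j _ h => hℓmem j h)
      (fun m hm => by
        obtain ⟨j, h1, h2⟩ := hℓsurj m hm.1 hm.2.1 hm.2.2
        exact ⟨j, Nat.zero_le _, h1, h2⟩) (fun i j _ h => hℓmono i j h) d]
    simp
  have hN : ∀ d, d ∈ {d : ℤ | ∃ j : ℕ, 1 ≤ j ∧ j < θ ∧ d = nn (j + 1) - nn j} ↔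
      ∃ x y, (0 < x ∧ ¬ G x) ∧ (0 < y ∧ ¬ G y) ∧ x < y ∧
        (∀ z, x < z → z < y → ¬ (0 < z ∧ ¬ G z)) ∧ d = y - x := by
    intro d
    exact enum_aux (fun x => 0 < x ∧ ¬ G x) 1 θ nn hnmem
      (fun m hm => hnsurj m hm.1 hm.2) hnmono d
  have hU : {d : ℤ | ∃ j : ℕ, j < θ ∧ d = ℓ (j + 1) - ℓ j} =
      {d : ℤ | ∃ j : ℕ, 1 ≤ j ∧ j < θ ∧ d = nn (j + 1) - nn j} ∪ {2} := by
    ext d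
    rw [Set.mem_union, hS, hN, Set.mem_singleton_iff]
    constructor
    · rintro ⟨x, y, ⟨gx, x0, x1⟩, ⟨gy, y0, y1⟩, hxy, hb, rfl⟩
      have hxF : x ≠ F := fun h => GF (h ▸ gx)
      have hyF : y ≠ F := fun h => GF (h ▸ gy)
      by_cases hy : y = F + 1
      · right
        have : ¬ x < F - 1 := fun h => hb (F - 1) h (by omega) ⟨GF1, by omega, by omega⟩
        omega
      · left
        refine ⟨F - y, F - x, ⟨by omega, ?_⟩, ⟨by omega, ?_⟩, by omega, ?_, by ring⟩
        · rw [sym]; simpa using gy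
        · rw [sym]; simpa using gx
        · rintro z z1 z2 ⟨z3, z4⟩
          exact hb (F - z) (by omega) (by omega) ⟨(sym z).1 z4, by omega, by omega⟩
    · rintro (⟨x, y, ⟨x0, gx⟩, ⟨y0, gy⟩, hxy, hb, rfl⟩ | rfl)
      · have gx' := (sym x).1 gx
        have gy' := (sym y).1 gy
        have := Gnn _ gx'
        have := Gnn _ gy'
        refine ⟨F - y, F - x, ⟨gy', by omega, by omega⟩, ⟨gx', by omega, by omega⟩,
          by omega, ?_, by ring⟩
        rintro z z1 z2 ⟨z3, z4⟩
        refine hb (F - z) (by omega) (by omega) ⟨by omega, ?_⟩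
        rw [sym]; simpa using z3
      · refine ⟨F - 1, F + 1, ⟨GF1, by omega, by omega⟩, ⟨Gφ, by omega, by omega⟩,
          by omega, ?_, by ring⟩
        rintro z z1 z2 ⟨z3, z4⟩
        have : z = F := by omega
        exact GF (this ▸ z3)
  refine ⟨fun hne => ?_, fun he => ⟨hU, ?_⟩⟩
  · rw [hU, Set.union_eq_left, Set.singleton_subset_iff, hN]
    refine ⟨p - 1, p + 1, ⟨by omega, fun h => ?_⟩, ⟨by omega, fun h => ?_⟩, by omega, ?_, by ring⟩
    · have := Gsmall _ h (by omega) (by omega) (by omega)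
      omega
    · have := Gsmall _ h (by omega) (by omega) (by omega)
      omega
    · rintro z z1 z2 ⟨z3, z4⟩
      have : z = p := by omega
      exact z4 ((hG z).2 ⟨0, 1, by omega, by omega, by rw [this]; ring⟩)
  · rw [hN]
    rintro ⟨x, y, ⟨x0, gx⟩, ⟨y0, gy⟩, hxy, hb, h2⟩
    have gz : G (x + 1) := by
      by_contra h
      exact hb (x + 1) (by omega) (by omega) ⟨by omega, h⟩
    obtain ⟨a, b, ha, hb', e⟩ := (hG _).1 gz
    by_cases ha0 : 0 < a
    · exact gx ((hG _).2 ⟨a - 1, b + 1, by omega, by omega, by linear_combination e + he⟩)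
    · have : a = 0 := by omega
      subst this
      by_cases hb0 : 0 < b
      · exact gy ((hG _).2 ⟨1, b - 1, by omega, by omega, by linear_combination e - he - h2⟩)
      · have : b = 0 := by omega
        subst this
        omega
end

section
/- (Theorem 1(ii)) S_Δ(p,q) = {r_{i−1} − z·r_i : 1 ≤ i ≤ t and 0 ≤ z ≤ Z_i − 1}. -/
set_option maxHeartbeats 4000000

/-- One-sided record. -/
def Rec13 (p q σ d u : ℤ) : Prop :=
  0 ≤ u ∧ p ∣ d - σ * u * q ∧
    ∀ e v : ℤ, 0 < e → e < d → 0 ≤ v → v ≤ u → ¬ p ∣ e - σ * v * q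

/-- State of the slow Euclidean algorithm. -/
def St13 (p q ε x y A B : ℤ) : Prop :=
  p ∣ x - ε * A * q ∧ p ∣ y + ε * B * q ∧ x * B + y * A = p ∧ 1 ≤ A ∧ 0 ≤ B

lemma St13.step {p q ε x y A B : ℤ} (h : St13 p q ε x y A B) (z : ℤ) (hz : 0 ≤ z) :
    St13 p q ε x (y - z * x) A (B + z * A) := by
  obtain ⟨⟨a, ha⟩, ⟨b, hb⟩, h3, h4, h5⟩ := h
  refine ⟨⟨a, ha⟩, ⟨b - z * a, ?_⟩, ?_, h4, by positivity⟩
  · linear_combination hb - z * ha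
  · linear_combination h3

lemma St13.swap {p q ε x y A B : ℤ} (h : St13 p q ε x y A B) (hB : 1 ≤ B) :
    St13 p q (-ε) y x B A := by
  obtain ⟨⟨a, ha⟩, ⟨b, hb⟩, h3, h4, h5⟩ := h
  refine ⟨⟨b, ?_⟩, ⟨a, ?_⟩, ?_, hB, by linarith⟩
  · linear_combination hb
  · linear_combination ha
  · linear_combination h3

lemma St13.ex_n {p q ε x y A B : ℤ} (h : St13 p q ε x y A B) (e v : ℤ)
    (hd : p ∣ e - (-ε) * v * q) : ∃ n, e * A + v * x = p * n := by
  obtain ⟨⟨a, ha⟩, ⟨b, hb⟩, h3, h4, h5⟩ := h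
  obtain ⟨c, hc⟩ := hd
  exact ⟨c * A + v * a, by linear_combination A * hc + v * ha⟩

lemma St13.ex_m {p q ε x y A B : ℤ} (h : St13 p q ε x y A B) (e v : ℤ)
    (hd : p ∣ e - (-ε) * v * q) : ∃ m, e * B - v * y = p * m := by
  obtain ⟨⟨a, ha⟩, ⟨b, hb⟩, h3, h4, h5⟩ := h
  obtain ⟨c, hc⟩ := hd
  exact ⟨c * B - v * b, by linear_combination B * hc - v * hb⟩

lemma St13.rec {p q ε x y A B : ℤ} (hp : 0 < p) (hx : 0 < x)
    (h : St13 p q ε x y A B) : Rec13 p q (-ε) y B := by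
  refine ⟨h.2.2.2.2, ?_, ?_⟩
  · have := h.2.1
    convert this using 1; ring
  · intro e v he hey hv hvB hd
    obtain ⟨n, hn⟩ := h.ex_n e v hd
    obtain ⟨-, -, h3, h4, h5⟩ := h
    have h1 : 0 < p * n := by rw [← hn]; positivity
    have h2 : p * n < p * 1 := by nlinarith
    have h6 : 0 < n := by by_contra hh; push Not at hh; nlinarith
    have h7 : n < 1 := lt_of_mul_lt_mul_left h2 hp.le
    omega

lemma St13.eq_of_rec {p q ε x y A B d w : ℤ} (hp : 0 < p) (hx : 0 < x) (hxy : x < y)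
    (h : St13 p q ε x y A B) (hr : Rec13 p q (-ε) d w) (h1 : y - x < d) (h2 : d ≤ y) :
    d = y := by
  by_contra hne
  have hdy : d < y := lt_of_le_of_ne h2 hne
  obtain ⟨hw, hdd, hrec⟩ := hr
  obtain ⟨n, hn⟩ := h.ex_n d w hdd
  obtain ⟨m, hm⟩ := h.ex_m d w hdd
  have hs := (h.step 1 (by norm_num))
  obtain ⟨-, -, h3, h4, h5⟩ := h
  have hwAB : w < A + B := by
    by_contra hh
    push Not at hh
    refine hrec (y - x) (A + B) (by linarith) h1 (by linarith) hh ?_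
    have := hs.2.1
    convert this using 1; ring
  have hn0 : 0 < n := by
    by_contra hh
    push Not at hh
    have : 0 < d := by linarith
    have : 0 < d * A := by positivity
    have : 0 ≤ w * x := by positivity
    nlinarith
  have hd : d = m * x + n * y := by
    apply mul_left_cancel₀ hp.ne'
    linear_combination (-d) * h3 + x * hm + y * hn
  have hw' : w = n * B - m * A := by
    apply mul_left_cancel₀ hp.ne'
    linear_combination (-w) * h3 - A * hm + B * hn
  have hm0 : m < 0 := by
    by_contra hh
    push Not at hh
    nlinarith [mul_nonneg hh hx.le]
  nlinarith [mul_nonneg (show 0 ≤ n - 1 by omega) h5, mul_nonneg (show 0 ≤ -m - 1 by omega) (show 0 ≤ A by linarith)]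


/-- Theorem 1(ii): `S_Δ(p,q) = {r_{i-1} - z·r_i : 1 ≤ i ≤ t, 0 ≤ z ≤ Z_i - 1}`,
where `(r_i)` and `(Z_i)` are the Euclidean algorithm sequences with `r₀ = p` and
`r₁ = ⟨q⟩_p`. -/
theorem stmt_13 (p q : ℤ) (hp : 3 ≤ p) (hpq : p < q) (hcop : IsCoprime p q)
    (θ : ℕ) (hθ : (θ : ℤ) * 2 = (p - 1) * (q - 1))
    (ℓ : ℕ → ℤ)
    (hℓmem : ∀ j : ℕ, j ≤ θ →
      (∃ a b : ℤ, 0 ≤ a ∧ 0 ≤ b ∧ ℓ j = a * q + b * p) ∧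
      0 ≤ ℓ j ∧ ℓ j ≤ (p - 1) * (q - 1))
    (hℓsurj : ∀ m : ℤ, (∃ a b : ℤ, 0 ≤ a ∧ 0 ≤ b ∧ m = a * q + b * p) →
      0 ≤ m → m ≤ (p - 1) * (q - 1) → ∃ j : ℕ, j ≤ θ ∧ ℓ j = m)
    (hℓmono : ∀ i j : ℕ, i < j → j ≤ θ → ℓ i < ℓ j)
    (t : ℕ) (ht : 1 ≤ t) (r Z : ℕ → ℤ)
    (hr0 : r 0 = p) (hr1 : r 1 = q % p)
    (hrec : ∀ i, 1 ≤ i → i ≤ t →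
      r (i - 1) = Z i * r i + r (i + 1) ∧ 0 ≤ r (i + 1) ∧ r (i + 1) < r i)
    (hrt : r t = 1) :
    {d : ℤ | ∃ j : ℕ, j < θ ∧ d = ℓ (j + 1) - ℓ j} =
    {d : ℤ | ∃ i : ℕ, 1 ≤ i ∧ i ≤ t ∧
      ∃ z : ℤ, 0 ≤ z ∧ z ≤ Z i - 1 ∧ d = r (i - 1) - z * r i} := by
  have hp0 : 0 < p := by linarith
  -- positivity facts
  have hpos : ∀ i, i ≤ t → 0 < r i := by
    intro i hi
    rcases Nat.eq_zero_or_pos i with h | h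
    · subst h; omega
    · have := hrec i h hi; omega
  have hr10 : r 1 < r 0 := by rw [hr0, hr1]; exact Int.emod_lt_of_pos _ hp0
  have hdec : ∀ k, k < t → r (k + 1) < r k := by
    intro k hk
    rcases Nat.eq_zero_or_pos k with h | h
    · subst h; exact hr10
    · exact (hrec k h hk.le).2.2
  have hrec' : ∀ k, k < t → r k = Z (k + 1) * r (k + 1) + r (k + 2) ∧ 0 ≤ r (k + 2) ∧
      r (k + 2) < r (k + 1) := by
    intro k hk
    exact hrec (k + 1) (by omega) (by omega)
  have hrt1 : r (t + 1) = 0 := by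
    have := hrec t ht le_rfl; omega
  have hZ : ∀ k, k < t → 1 ≤ Z (k + 1) := by
    intro k hk
    have h1 := hrec' k hk
    have h2 := hdec k hk
    have h3 := hpos (k + 1) (by omega)
    by_contra hh
    have : Z (k + 1) ≤ 0 := by omega
    nlinarith
  have hSt : ∀ k, k < t → ∃ A B, St13 p q ((-1) ^ k) (r (k + 1)) (r k) A B := by
    intro k
    induction k with
    | zero =>
      intro _
      refine ⟨1, 0, ?_, ?_, ?_, le_rfl, le_rfl⟩
      · rw [hr1]
        refine ⟨-(q / p), ?_⟩
        have := Int.emod_add_mul_ediv q p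
        simp
        linarith
      · simp [hr0]
      · simp [hr0]
    | succ k ih =>
      intro hk
      obtain ⟨A, B, h⟩ := ih (by omega)
      have hz := hZ k (by omega)
      have h1 := h.step (Z (k + 1)) (by linarith)
      have hA := h.2.2.2.1
      have hB := h.2.2.2.2
      have h2 := h1.swap (by nlinarith)
      refine ⟨B + Z (k + 1) * A, A, ?_⟩
      · have e1 : r (k + 1 + 1) = r k - Z (k + 1) * r (k + 1) := by
          have := (hrec' k (by omega)).1
          show r (k + 2) = _
          linarith
        rw [e1, pow_succ, mul_neg_one]
        exact h2
  have hmono' : ∀ i j, i ≤ j → j ≤ θ → ℓ i ≤ ℓ j := by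
    intro i j hij hj
    rcases Nat.eq_or_lt_of_le hij with h | h
    · rw [h]
    · exact (hℓmono i j h hj).le
  have hgap : ∀ n d : ℤ, 0 < d → (∃ a b : ℤ, 0 ≤ a ∧ 0 ≤ b ∧ n = a * q + b * p) → 0 ≤ n →
      (∃ a b : ℤ, 0 ≤ a ∧ 0 ≤ b ∧ n + d = a * q + b * p) → n + d ≤ (p - 1) * (q - 1) →
      (∀ e a b : ℤ, 0 < e → e < d → 0 ≤ a → 0 ≤ b → n + e = a * q + b * p → False) →
      ∃ j : ℕ, j < θ ∧ d = ℓ (j + 1) - ℓ j := by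
    intro n d hd hn hn0 hnd hle hno
    obtain ⟨j, hj, hjn⟩ := hℓsurj n hn hn0 (by linarith)
    obtain ⟨k, hk, hkn⟩ := hℓsurj (n + d) hnd (by linarith) hle
    have hjk : j < k := by
      by_contra hh
      have := hmono' k j (by omega) hj
      linarith
    have hlt := hℓmono j (j + 1) (by omega) (by omega)
    refine ⟨j, by omega, ?_⟩
    by_contra hne
    have hle2 := hmono' (j + 1) k (by omega) hk
    obtain ⟨⟨a, b, ha, hb, hab⟩, -⟩ := hℓmem (j + 1) (by omega)
    refine hno (ℓ (j + 1) - n) a b (by linarith) ?_ ha hb (by linarith)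
    rcases lt_or_eq_of_le (show ℓ (j + 1) - n ≤ d by linarith) with h | h
    · exact h
    · exact absurd (by rw [hjn]; exact h.symm) hne
  have hRG : ∀ σ d u : ℤ, (σ = 1 ∨ σ = -1) → 0 < d → d ≤ p → Rec13 p q σ d u → u ≤ p - 2 →
      (u = p - 2 → d ≤ 2) → ∃ j : ℕ, j < θ ∧ d = ℓ (j + 1) - ℓ j := by
    intro σ d u hσ hd hdp ⟨hu, ⟨c, hc⟩, hno⟩ hu2 hu3
    rcases hσ with rfl | rfl
    · rcases eq_or_lt_of_le hu with h0 | h0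
      · have hdp' : d = p := by
          have h1 : d = p * c := by rw [← hc, ← h0]; ring
          have : 0 < c := by by_contra hh; push Not at hh; nlinarith
          nlinarith
        subst hdp'
        refine hgap 0 d hd ⟨0, 0, by simp⟩ le_rfl ⟨0, 1, by simp⟩ (by nlinarith) ?_
        intro e a b he hed ha hb hab
        have ha0 : a = 0 := by
          by_contra hh
          have : 1 ≤ a := by omega
          nlinarith
        have hb0 : b = 0 := by
          by_contra hh
          have : 1 ≤ b := by omega
          nlinarith
        subst ha0 hb0
        simp at hab
        omega
      · have hn : u * q - d = (-c) * p := by linear_combination -hc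
        have hn0 : 0 ≤ u * q - d := by nlinarith
        have hc0 : 0 ≤ -c := by by_contra hh; push Not at hh; nlinarith
        refine hgap (u * q - d) d hd ⟨0, -c, le_rfl, hc0, by linarith⟩ hn0
          ⟨u, 0, hu, le_rfl, by ring⟩ (by nlinarith) ?_
        intro e a b he hed ha hb hab
        refine hno e a he hed ha ?_ ⟨b + c, by linear_combination hab - hn⟩
        by_contra hh
        have : u + 1 ≤ a := by omega
        nlinarith [mul_nonneg hb hp0.le]
    · have hn : u * q + d = c * p := by linear_combination hc
      have hc0 : 0 ≤ c := by by_contra hh; push Not at hh; nlinarith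
      have hle : u * q + d ≤ (p - 1) * (q - 1) := by
        rcases eq_or_lt_of_le hu2 with h | h
        · have := hu3 h
          rw [h]; nlinarith
        · have : u ≤ p - 3 := by omega
          nlinarith
      refine hgap (u * q) d hd ⟨u, 0, hu, le_rfl, by ring⟩ (by nlinarith)
          ⟨0, c, le_rfl, hc0, by linarith⟩ hle ?_
      intro e a b he hed ha hb hab
      refine hno e (u - a) he hed ?_ (by linarith) ⟨b, by linear_combination hab⟩
      by_contra hh
      have : u + 1 ≤ a := by omega
      nlinarith [mul_nonneg hb hp0.le]
  have hsign : ∀ k : ℕ, ((-1 : ℤ) ^ k = 1 ∨ (-1 : ℤ) ^ k = -1) := fun k => neg_one_pow_eq_or ℤ k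
  ext d
  simp only [Set.mem_ofPred_eq]
  constructor
  · rintro ⟨j, hj, hd⟩
    have hbet : ∀ e a b : ℤ, 0 < e → e < d → 0 ≤ a → 0 ≤ b → ℓ j + e = a * q + b * p → False := by
      intro e a b he hed ha hb hab
      have h1 := hℓmem j hj.le
      have h2 := hℓmem (j + 1) hj
      obtain ⟨k, hk, hkn⟩ := hℓsurj (ℓ j + e) ⟨a, b, ha, hb, hab⟩ (by linarith) (by linarith)
      rcases Nat.lt_or_ge j k with h | h
      · have := hmono' (j + 1) k h hk
        linarith
      · have := hmono' k j h hj.le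
        linarith
    have hd0 : 0 < d := by have := hℓmono j (j + 1) (by omega) hj; linarith
    obtain ⟨⟨a, b, ha, hb, hab⟩, -⟩ := hℓmem j hj.le
    obtain ⟨⟨a', b', ha', hb', hab'⟩, -⟩ := hℓmem (j + 1) hj
    have hdp : d ≤ p := by
      by_contra hh
      exact hbet p a (b + 1) hp0 (by linarith) ha (by linarith) (by rw [hab]; ring)
    have hR : ∃ σ u, (σ = 1 ∨ σ = -1) ∧ Rec13 p q σ d u := by
      rcases le_or_gt a a' with h | h
      · refine ⟨1, a' - a, Or.inl rfl, by linarith, ⟨b' - b, by rw [hd, hab, hab']; ring⟩, ?_⟩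
        rintro e v he hed hv hvu ⟨c, hc⟩
        refine hbet e (a + v) (b + c) he hed (by linarith) ?_ (by linear_combination hab + hc)
        by_contra hh
        have : b + c ≤ -1 := by omega
        have h5 : (b + c) * p ≤ -p := by nlinarith
        have h6 : (a + v) * q ≤ a' * q := by nlinarith
        have h7 : 0 ≤ b' * p := by positivity
        nlinarith
      · refine ⟨-1, a - a', Or.inr rfl, by linarith, ⟨b' - b, by rw [hd, hab, hab']; ring⟩, ?_⟩
        rintro e v he hed hv hvu ⟨c, hc⟩
        refine hbet e (a - v) (b + c) he hed (by linarith) ?_ (by linear_combination hab + hc)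
        by_contra hh
        have : b + c ≤ -1 := by omega
        have h5 : (b + c) * p ≤ -p := by nlinarith
        have h7 : 0 ≤ b * p := by positivity
        have h8 : 0 ≤ v * q := mul_nonneg hv (by linarith)
        nlinarith
    obtain ⟨σ, u, hσ, hR⟩ := hR
    by_contra hnot
    have hlist : ∀ k, k < t → ∀ z, 0 ≤ z → z ≤ Z (k + 1) - 1 → d ≠ r k - z * r (k + 1) := by
      intro k hk z hz hz2 he
      exact hnot ⟨k + 1, by omega, by omega, z, hz, hz2, he⟩
    have hQ : ∀ k, k ≤ t → (σ = -(-1) ^ k ∧ d ≤ r k) ∨ (σ = (-1) ^ k ∧ d ≤ r (k + 1)) := by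
      intro k
      induction k with
      | zero =>
        intro _
        rcases hσ with h | h
        · right
          refine ⟨by simpa using h, ?_⟩
          by_contra hh
          push Not at hh
          simp only [zero_add] at hh
          have hu1 : u < 1 := by
            by_contra hu1
            obtain ⟨A, B, hS⟩ := hSt 0 ht
            refine hR.2.2 (r 1) 1 (hpos 1 ht) hh (by norm_num) (by omega) ?_
            rw [hr1, h]
            refine ⟨-(q / p), ?_⟩
            have := Int.emod_add_mul_ediv q p
            linarith
          have hu0 : u = 0 := by have := hR.1; omega
          have h2 := hR.2.1
          rw [hu0] at h2
          simp at h2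
          have h3 := Int.le_of_dvd hd0 h2
          have := hlist 0 ht 0 le_rfl (by have := hZ 0 ht; linarith)
          rw [hr0] at this
          apply this; linarith
        · left
          refine ⟨by simpa using h, ?_⟩
          rw [hr0]; exact hdp
      | succ k ih =>
        intro hk
        have hkt : k < t := hk
        rcases ih (by omega) with ⟨h1, h2⟩ | ⟨h1, h2⟩
        · right
          refine ⟨by rw [h1, pow_succ]; ring, ?_⟩
          by_contra hh
          push Not at hh
          have hx := hpos (k + 1) hk
          obtain ⟨e1, e2, e3⟩ := hrec' k hkt
          set x := r (k + 1) with hxdef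
          have hh' : r (k + 2) < d := hh
          have hm := Int.emod_add_mul_ediv (r k - d) x
          have hm1 := Int.emod_nonneg (r k - d) hx.ne'
          have hm2 := Int.emod_lt_of_pos (r k - d) hx
          set z := (r k - d) / x with hz
          have hz0 : 0 ≤ z := Int.ediv_nonneg (by linarith) hx.le
          have hz1 : z ≤ Z (k + 1) - 1 := by
            by_contra hc
            have : Z (k + 1) ≤ z := by omega
            nlinarith
          obtain ⟨A, B, hS⟩ := hSt k hkt
          have hS' := hS.step z hz0
          rw [h1] at hR
          have hy : x ≤ r k - z * x := by nlinarith
          refine hlist k hkt z hz0 hz1 ?_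
          rcases eq_or_lt_of_le hy with h | h
          · -- terminal
            have h9 : r (k + 2) = 0 := by nlinarith
            have hkt' : k + 1 = t := by
              by_contra hc
              have := hpos (k + 2) (by omega)
              omega
            have hx1 : x = 1 := by rw [hxdef, hkt', hrt]
            nlinarith
          · exact hS'.eq_of_rec hp0 hx h hR (by nlinarith) (by nlinarith)
        · left
          exact ⟨by rw [h1, pow_succ]; ring, h2⟩
    rcases hQ t le_rfl with ⟨-, h⟩ | ⟨-, h⟩
    · rw [hrt] at h
      obtain ⟨k, rfl⟩ : ∃ k, t = k + 1 := ⟨t - 1, by omega⟩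
      refine hlist k (by omega) (Z (k + 1) - 1) (by have := hZ k (by omega); linarith) le_rfl ?_
      have e1 := (hrec' k (by omega)).1
      have e2 : r (k + 2) = 0 := hrt1
      rw [e2, hrt] at e1
      rw [hrt]
      linarith
    · rw [hrt1] at h; omega
  · rintro ⟨i, hi, hit, z, hz0, hz1, hd⟩
    obtain ⟨k, rfl⟩ : ∃ k, i = k + 1 := ⟨i - 1, by omega⟩
    simp only [Nat.add_sub_cancel] at hd
    have hkt : k < t := hit
    obtain ⟨A, B, hS⟩ := hSt k hkt
    have hS' := hS.step z hz0
    rw [← hd] at hS'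
    have hx := hpos (k + 1) hit
    obtain ⟨e1, e2, e3⟩ := hrec' k hkt
    have hd0 : 0 < d := by rw [hd, e1]; nlinarith
    have hR := hS'.rec hp0 hx
    generalize B + z * A = B' at hS' hR
    obtain ⟨f1, f2, f3, f4, f5⟩ := hS'
    have g1 : B' ≤ r (k + 1) * B' := by nlinarith
    have g2 : A ≤ d * A := by nlinarith
    have g3 : d ≤ d * A := by nlinarith
    rcases lt_or_ge B' (p - 1) with h | h
    · refine hRG (-(-1) ^ k) d B' ?_ hd0 (by linarith) hR (by omega) (by intro h; linarith)
      rcases hsign k with h | h <;> simp [h]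
    · have hA : A = 1 := by linarith
      have hd1 : d = 1 := by linarith
      have hx1 : r (k + 1) = 1 := by
        by_contra hne
        have : 2 ≤ r (k + 1) := by omega
        nlinarith
      refine hRG ((-1) ^ k) d 1 (hsign k) hd0 (by linarith) ⟨by norm_num, ?_, ?_⟩ (by linarith) (by intro; linarith)
      · rw [hd1]; rw [hx1, hA] at f1; exact f1
      · intro e v h1 h2; omega
end

section
/- The following three assertions hold: (i) ℓ_θ = pq − p − q + 1 and ℓ_{θ−1} = pq − p − q − 1, so ℓ_θ − ℓ_{θ−1} = 2; (ii) there exists an index j with ℓ_{j+1} = ℓ_j + 1; (iii) the equation ℓ_j − ℓ_{j−1} = 2 has a solution with j < θ if and only if q > p + 1. -/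
def InS (p q m : ℤ) : Prop := ∃ a b : ℤ, 0 ≤ a ∧ 0 ≤ b ∧ m = a * q + b * p

lemma InS.nonneg {p q m : ℤ} (hp : 3 ≤ p) (hpq : p < q) (h : InS p q m) : 0 ≤ m := by
  obtain ⟨a, b, ha, hb, rfl⟩ := h
  have h1 : 0 ≤ a * q := mul_nonneg ha (by omega)
  have h2 : 0 ≤ b * p := mul_nonneg hb (by omega)
  omega

lemma rep {p q : ℤ} (hp : 3 ≤ p) (hcop : IsCoprime p q) (n : ℤ) :
    ∃ a b : ℤ, 0 ≤ a ∧ a < p ∧ n = a * q + b * p := by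
  obtain ⟨u, v, h⟩ := hcop
  refine ⟨(n * v) % p, n * u + (n * v) / p * q, Int.emod_nonneg _ (by omega),
    Int.emod_lt_of_pos _ (by omega), ?_⟩
  have := Int.emod_add_mul_ediv (n * v) p
  have h2 : (n * v) % p = n * v - p * (n * v / p) := by omega
  rw [h2]
  linear_combination (-n) * h

lemma symm1 {p q : ℤ} (hp : 3 ≤ p) (hcop : IsCoprime p q) (n : ℤ)
    (h : ¬ InS p q n) : InS p q (p * q - p - q - n) := by
  obtain ⟨a, b, h0, h1, h2⟩ := rep hp hcop n
  have hb : b < 0 := by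
    by_contra hb
    exact h ⟨a, b, h0, by omega, h2⟩
  exact ⟨p - 1 - a, -1 - b, by omega, by omega, by rw [h2]; ring⟩

lemma frob {p q : ℤ} (hp : 3 ≤ p) (hpq : p < q) (hcop : IsCoprime p q) :
    ¬ InS p q (p * q - p - q) := by
  rintro ⟨a, b, ha, hb, h⟩
  have hd : p ∣ (a + 1) * q := ⟨q - (b + 1), by linear_combination -h⟩
  have hd2 : p ∣ a + 1 := hcop.dvd_of_dvd_mul_right hd
  have h3 := Int.le_of_dvd (by omega) hd2
  nlinarith [mul_nonneg (sub_nonneg.2 h3) (by omega : 0 ≤ q), mul_nonneg hb (by omega : 0 ≤ p)]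

lemma symm2 {p q : ℤ} (hp : 3 ≤ p) (hpq : p < q) (hcop : IsCoprime p q) (n : ℤ)
    (h : InS p q n) : ¬ InS p q (p * q - p - q - n) := by
  rintro ⟨a, b, ha, hb, h1⟩
  obtain ⟨c, d, hc, hd, h2⟩ := h
  exact frob hp hpq hcop ⟨a + c, b + d, by omega, by omega, by linear_combination h1 + h2⟩

lemma small {p q n : ℤ} (hp : 3 ≤ p) (hpq : p < q) (h : InS p q n) :
    n = 0 ∨ n = p ∨ 2 * p ≤ n ∨ q ≤ n := by
  obtain ⟨a, b, ha, hb, h⟩ := h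
  have h1 : 0 ≤ a * q := mul_nonneg ha (by omega)
  have h2 : 0 ≤ b * p := mul_nonneg hb (by omega)
  rcases ha.eq_or_lt with rfl | ha
  · rcases hb.eq_or_lt with rfl | hb
    · left; simpa using h
    · obtain rfl | hb : b = 1 ∨ 2 ≤ b := by omega
      · right; left; simpa using h
      · right; right; left; nlinarith
  · right; right; right; nlinarith

lemma consec {p q : ℤ} (hp : 3 ≤ p) (hpq : p < q) (hcop : IsCoprime p q) :
    ∃ m, InS p q m ∧ InS p q (m + 1) ∧ m + 1 ≤ (p - 1) * (q - 1) := by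
  obtain ⟨a, b, h0, h1, h2⟩ := rep hp hcop 1
  have ha : 0 < a := by
    rcases h0.eq_or_lt with rfl | ha
    · exfalso
      have : p ∣ 1 := ⟨b, by linarith⟩
      have := Int.le_of_dvd (by norm_num) this
      omega
    · exact ha
  have hb : b < 0 := by
    by_contra hb
    nlinarith [mul_nonneg (by omega : 0 ≤ b) (by omega : 0 ≤ p)]
  have hb2 : 0 < q + b := by
    by_contra hb2
    nlinarith [mul_nonneg (by omega : 0 ≤ -(q+b)) (by omega : 0 ≤ p),
      mul_nonneg (by omega : 0 ≤ p - 1 - a) (by omega : 0 ≤ q)]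
  have key : p * q + 1 < 2 * ((p - 1) * (q - 1) + 1) := by
    obtain h | h : q = 4 ∨ 5 ≤ q := by omega
    · have : p = 3 := by omega
      subst h this; norm_num
    · nlinarith
  by_cases hc : a * q ≤ (p - 1) * (q - 1)
  · exact ⟨-b * p, ⟨0, -b, by omega, by omega, by ring⟩,
      ⟨a, 0, by omega, by omega, by linear_combination h2⟩, by linarith⟩
  · refine ⟨(p - a) * q, ⟨p - a, 0, by omega, by omega, by ring⟩,
      ⟨0, q + b, by omega, by omega, by linear_combination h2⟩, ?_⟩
    have : (p - a) * q = p * q - a * q := by ring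
    omega

lemma noGap {p m : ℤ} (hp : 3 ≤ p) (h0 : InS p (p + 1) m) (h1 : ¬ InS p (p + 1) (m + 1))
    (h2 : InS p (p + 1) (m + 2)) : (p - 1) * p ≤ m + 2 := by
  obtain ⟨a, b, ha, hb, h⟩ := h0
  obtain ⟨c, d, hc, hd, h'⟩ := h2
  have hb0 : b = 0 := by
    by_contra hb0
    exact h1 ⟨a + 1, b - 1, by omega, by omega, by rw [h]; ring⟩
  subst hb0
  have hk : a + 1 ≤ c + d := by
    by_contra hk
    nlinarith [mul_nonneg (by omega : 0 ≤ a - c - d) (by omega : 0 ≤ p)]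
  by_contra hlt
  have hk2 : c + d ≤ p - 2 := by
    by_contra hk2
    nlinarith [mul_nonneg (by omega : 0 ≤ c + d - (p - 1)) (by omega : 0 ≤ p)]
  nlinarith [mul_nonneg (by omega : 0 ≤ c + d - (a + 1)) (by omega : 0 ≤ p)]

/-- Lemma 12: (i) `ℓ_θ = pq - p - q + 1` and `ℓ_{θ-1} = pq - p - q - 1`, so
`ℓ_θ - ℓ_{θ-1} = 2`; (ii) there is an index `j` with `ℓ_{j+1} = ℓ_j + 1`;
(iii) `ℓ_j - ℓ_{j-1} = 2` is soluble with `j < θ` iff `q > p + 1`. -/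
theorem stmt_14 (p q : ℤ) (hp : 3 ≤ p) (hpq : p < q) (hcop : IsCoprime p q)
    (θ : ℕ) (hθ : (θ : ℤ) * 2 = (p - 1) * (q - 1))
    (ℓ : ℕ → ℤ)
    (hℓmem : ∀ j : ℕ, j ≤ θ →
      (∃ a b : ℤ, 0 ≤ a ∧ 0 ≤ b ∧ ℓ j = a * q + b * p) ∧
      0 ≤ ℓ j ∧ ℓ j ≤ (p - 1) * (q - 1))
    (hℓsurj : ∀ m : ℤ, (∃ a b : ℤ, 0 ≤ a ∧ 0 ≤ b ∧ m = a * q + b * p) →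
      0 ≤ m → m ≤ (p - 1) * (q - 1) → ∃ j : ℕ, j ≤ θ ∧ ℓ j = m)
    (hℓmono : ∀ i j : ℕ, i < j → j ≤ θ → ℓ i < ℓ j) :
    (ℓ θ = p * q - p - q + 1 ∧ ℓ (θ - 1) = p * q - p - q - 1 ∧
      ℓ θ - ℓ (θ - 1) = 2) ∧
    (∃ j : ℕ, j < θ ∧ ℓ (j + 1) = ℓ j + 1) ∧
    ((∃ j : ℕ, 1 ≤ j ∧ j < θ ∧ ℓ j - ℓ (j - 1) = 2) ↔ p + 1 < q) := by
  have mem : ∀ j, j ≤ θ → InS p q (ℓ j) := fun j hj => (hℓmem j hj).1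
  have le : ∀ j, j ≤ θ → ℓ j ≤ (p - 1) * (q - 1) := fun j hj => (hℓmem j hj).2.2
  have surj : ∀ m, InS p q m → m ≤ (p - 1) * (q - 1) → ∃ j : ℕ, j ≤ θ ∧ ℓ j = m :=
    fun m hm h => hℓsurj m hm (hm.nonneg hp hpq) h
  have lt_of : ∀ i j, i ≤ θ → ℓ i < ℓ j → i < j := by
    intro i j hi h
    by_contra hc
    rcases (not_lt.1 hc).eq_or_lt with rfl | h'
    · exact lt_irrefl _ h
    · exact lt_asymm h (hℓmono _ _ h' hi)
  have hF : (p - 1) * (q - 1) = p * q - p - q + 1 := by ring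
  rw [hF] at le surj
  have t1 : InS p q (p * q - p - q + 1) := by
    have := symm1 hp hcop (-1) (fun h => by have := h.nonneg hp hpq; omega)
    rwa [sub_neg_eq_add] at this
  have t2 : InS p q (p * q - p - q - 1) :=
    symm1 hp hcop 1 (fun h => by have := small hp hpq h; omega)
  have t3 := frob hp hpq hcop
  -- consecutive elements of the semigroup with nothing in between
  have step : ∀ m n, InS p q m → InS p q n → m < n → n ≤ p * q - p - q + 1 →
      (∀ k, m < k → k < n → ¬ InS p q k) → ∃ j, j < θ ∧ ℓ j = m ∧ ℓ (j + 1) = n := by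
    intro m n hm hn hmn hnF hno
    obtain ⟨i, hi, rfl⟩ := surj m hm (by omega)
    obtain ⟨j, hj, rfl⟩ := surj n hn hnF
    have hij := lt_of i j hi hmn
    have : j = i + 1 := by
      by_contra hne
      exact hno _ (hℓmono i (i + 1) (by omega) (by omega))
        (hℓmono (i + 1) j (by omega) hj) (mem _ (by omega))
    subst this
    exact ⟨i, by omega, rfl, rfl⟩
  have top : ℓ θ = p * q - p - q + 1 := by
    obtain ⟨j, hj, h⟩ := surj _ t1 le_rfl
    rcases hj.eq_or_lt with rfl | hj
    · exact h
    · have := hℓmono _ _ hj le_rfl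
      have := le θ le_rfl
      omega
  have top2 : ℓ (θ - 1) = p * q - p - q - 1 := by
    obtain ⟨j, hj, h1, h2⟩ := step _ _ t2 t1 (by omega) le_rfl (by
      intro k hk1 hk2
      have : k = p * q - p - q := by omega
      rwa [this])
    have : j + 1 = θ := by
      by_contra hne
      have := hℓmono (j + 1) θ (by omega) le_rfl
      omega
    subst this
    simpa using h1
  refine ⟨⟨top, top2, by omega⟩, ?_, ?_, ?_⟩
  · obtain ⟨m, h0, h1, h2⟩ := consec hp hpq hcop
    obtain ⟨j, hj, e1, e2⟩ := step _ _ h0 h1 (by omega) (by omega) (by intros; omega)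
    exact ⟨j, hj, by omega⟩
  · rintro ⟨j, hj1, hj, h⟩
    by_contra hq
    have hq : q = p + 1 := by omega
    subst hq
    obtain ⟨i, rfl⟩ : ∃ i, j = i + 1 := ⟨j - 1, by omega⟩
    simp only [Nat.add_sub_cancel] at h
    have := noGap hp (mem i (by omega)) (by
      intro hm
      obtain ⟨k, hk, e⟩ := surj _ hm (by have := le (i + 1) (by omega); omega)
      have := lt_of i k (by omega) (by omega)
      have := lt_of k (i + 1) (by omega) (by omega)
      omega) (by
      have := mem (i + 1) (by omega)
      rwa [show ℓ (i + 1) = ℓ i + 2 by omega] at this)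
    have h3 := hℓmono (i + 1) θ (by omega) le_rfl
    have : (p - 1) * p = p * (p + 1) - p - (p + 1) + 1 := by ring
    omega
  · intro hq
    have m0 := symm1 hp hcop (p + 1) (fun h => by have := small hp hpq h; omega)
    have m2 := symm1 hp hcop (p - 1) (fun h => by have := small hp hpq h; omega)
    have m1 := symm2 hp hpq hcop p ⟨0, 1, by omega, by omega, by ring⟩
    obtain ⟨j, hj, e1, e2⟩ := step _ _ m0 m2 (by omega) (by omega) (by
      intro k hk1 hk2
      have : k = p * q - p - q - p := by omega
      rwa [this])
    refine ⟨j + 1, by omega, ?_, by simp only [Nat.add_sub_cancel]; omega⟩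
    by_contra hc
    have : j + 1 = θ := by omega
    rw [this] at e2
    omega
end

section
/- Let u be the multiplicative inverse of q modulo p with 0 < u < p. For every nonnegative integer n, write n uniquely (by the Chinese remainder theorem) as n = x_n·q + y_n·p + δ_n·pq with 0 ≤ x_n < p, 0 ≤ y_n < q and δ_n ∈ ℤ. Then x_n = ⟨n·u⟩_p, and n ∈ ⟨p,q⟩ if and only if ⟨n·u⟩_p ≤ ⌊n/q⌋. -/
/-- Lemma 13: with `u` the inverse of `q` mod `p`, if a nonnegative integer `n` is
written (uniquely, by CRT) as `n = x·q + y·p + δ·pq` with `0 ≤ x < p`, `0 ≤ y < q`,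
then `x = ⟨n·u⟩_p`; moreover `n ∈ ⟨p,q⟩` iff `⟨n·u⟩_p ≤ ⌊n/q⌋`. -/
theorem stmt_15 (p q : ℤ) (hp : 3 ≤ p) (hpq : p < q) (hcop : IsCoprime p q)
    (u : ℤ) (hu0 : 0 < u) (hup : u < p) (huq : (q * u) % p = 1) :
    ∀ n : ℤ, 0 ≤ n →
      (∀ x y δ : ℤ, 0 ≤ x → x < p → 0 ≤ y → y < q →
        n = x * q + y * p + δ * (p * q) → x = (n * u) % p) ∧
      ((∃ a b : ℤ, 0 ≤ a ∧ 0 ≤ b ∧ n = a * q + b * p) ↔ (n * u) % p ≤ n / q) := by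
  intro n hn
  have hk : q * u = 1 + p * (q * u / p) := by
    have := Int.emod_add_mul_ediv (q * u) p
    rw [huq] at this
    exact this.symm
  generalize q * u / p = k at hk
  have hq : 0 < q := by omega
  refine ⟨?_, ?_, ?_⟩
  · intro x y δ hx0 hx hy0 hy h
    have e : n * u = x + p * (x * k + y * u + δ * q * u) := by
      rw [h]; linear_combination x * hk
    rw [e, Int.add_mul_emod_self_left, Int.emod_eq_of_lt hx0 hx]
  · rintro ⟨a, b, ha, hb, h⟩
    have e : n * u = a + p * (a * k + b * u) := by
      rw [h]; linear_combination a * hk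
    rw [e, Int.add_mul_emod_self_left]
    have h1 : a % p ≤ a := by
      have h2 := Int.emod_add_mul_ediv a p
      have h3 : 0 ≤ p * (a / p) :=
        mul_nonneg (by omega) (Int.ediv_nonneg ha (by omega))
      linarith
    refine h1.trans ((Int.le_ediv_iff_mul_le hq).2 ?_)
    have : 0 ≤ b * p := mul_nonneg hb (by omega)
    linarith
  · intro h
    have h1 := (Int.le_ediv_iff_mul_le hq).1 h
    have h2 := Int.emod_add_mul_ediv (n * u) p
    have h0 := Int.emod_nonneg (n * u) (show p ≠ 0 by omega)
    generalize n * u / p = m at h2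
    generalize n * u % p = r at *
    have e : n = r * q + (m * q - n * k) * p := by
      linear_combination -n * hk - q * h2
    refine ⟨r, m * q - n * k, h0, ?_, e⟩
    have : 0 ≤ (m * q - n * k) * p := by linarith
    exact nonneg_of_mul_nonneg_left this (by omega)
end

section
/- Let u = x₁ be the multiplicative inverse of q modulo p with 0 < u < p. Then S_Δ(p,q) ⊆ D_Δ(p,u); that is, for every pair of consecutive elements (ℓ_j, ℓ_{j+1}) of S(p,q), the difference ℓ_{j+1} − ℓ_j equals b − a for some pair (a,b) satisfying condition (4). -/
/-- Lemma 14: with `u = x₁` the inverse of `q` mod `p`, `S_Δ(p,q) ⊆ D_Δ(p,u)`: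
every difference `ℓ_{j+1} - ℓ_j` of consecutive elements of `S(p,q)` equals `b - a`
for some pair `(a,b)` satisfying condition (4). -/
theorem stmt_16 (p q : ℤ) (hp : 3 ≤ p) (hpq : p < q) (hcop : IsCoprime p q)
    (θ : ℕ) (hθ : (θ : ℤ) * 2 = (p - 1) * (q - 1))
    (ℓ : ℕ → ℤ)
    (hℓmem : ∀ j : ℕ, j ≤ θ →
      (∃ a b : ℤ, 0 ≤ a ∧ 0 ≤ b ∧ ℓ j = a * q + b * p) ∧
      0 ≤ ℓ j ∧ ℓ j ≤ (p - 1) * (q - 1))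
    (hℓsurj : ∀ m : ℤ, (∃ a b : ℤ, 0 ≤ a ∧ 0 ≤ b ∧ m = a * q + b * p) →
      0 ≤ m → m ≤ (p - 1) * (q - 1) → ∃ j : ℕ, j ≤ θ ∧ ℓ j = m)
    (hℓmono : ∀ i j : ℕ, i < j → j ≤ θ → ℓ i < ℓ j)
    (u : ℤ) (hu0 : 0 < u) (hup : u < p) (huq : (q * u) % p = 1) :
    ∀ j : ℕ, j < θ →
      ∃ a b : ℤ, a < b ∧
        (∀ n : ℤ, a < n → n < b → max ((u * a) % p) ((u * b) % p) < (u * n) % p) ∧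
        b - a = ℓ (j + 1) - ℓ j := by
  have hp0 : 0 < p := by linarith
  have hq0 : 0 < q := by linarith
  have hdq : p ∣ q * u - 1 := by
    have := Int.dvd_self_sub_emod (x := q * u) (m := p)
    rwa [huq] at this
  obtain ⟨c, hc⟩ := hdq
  have hA : ∀ m a b : ℤ, 0 ≤ a → 0 ≤ b → m = a * q + b * p → ((u * m) % p) * q ≤ m := by
    intro m a b ha hb hm
    have h1 : (u * m) % p = a % p := by
      apply Int.ModEq.symm
      apply (Int.modEq_iff_dvd).2
      refine ⟨a * c + u * b, ?_⟩
      rw [hm]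
      linear_combination a * hc
    rw [h1]
    have h2 : a % p ≤ a := by
      have e1 := Int.mul_ediv_add_emod a p
      have e2 := mul_nonneg hp0.le (Int.ediv_nonneg ha hp0.le)
      linarith
    nlinarith [mul_nonneg hb hp0.le, mul_le_mul_of_nonneg_right h2 hq0.le]
  have hB : ∀ n : ℤ, ((u * n) % p) * q ≤ n →
      ∃ a b : ℤ, 0 ≤ a ∧ 0 ≤ b ∧ n = a * q + b * p := by
    intro n hn
    have h0 := Int.emod_nonneg (u * n) hp0.ne'
    have h1 := Int.mul_ediv_add_emod (u * n) p
    refine ⟨(u * n) % p, q * (u * n / p) - c * n, h0, ?_, ?_⟩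
    · have : n - ((u * n) % p) * q = (q * (u * n / p) - c * n) * p := by
        linear_combination (-q) * h1 - n * hc
      by_contra hneg
      push Not at hneg
      nlinarith
    · linear_combination (-q) * h1 - n * hc
  intro j hj
  have hlt := hℓmono j (j+1) (by omega) (by omega)
  obtain ⟨⟨a1, b1, ha1, hb1, he1⟩, hj0, hj1⟩ := hℓmem j (by omega)
  obtain ⟨⟨a2, b2, ha2, hb2, he2⟩, hk0, hk1⟩ := hℓmem (j+1) (by omega)
  have hnext : ∀ m : ℤ, (∃ a b : ℤ, 0 ≤ a ∧ 0 ≤ b ∧ m = a * q + b * p) → ℓ j < m →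
      ℓ (j+1) ≤ m := by
    intro m hm hjm
    by_contra hcon
    push Not at hcon
    obtain ⟨i, hi, him⟩ := hℓsurj m hm (by linarith) (by linarith)
    have h1 : j < i := by
      by_contra h
      rcases (not_lt.1 h).lt_or_eq with h | h
      · have := hℓmono i j h (by omega)
        linarith
      · subst h; linarith
    rcases (Nat.succ_le_of_lt h1).lt_or_eq with h | h
    · have := hℓmono _ i h hi
      simp only [Nat.succ_eq_add_one] at this
      linarith
    · simp only [Nat.succ_eq_add_one] at h
      rw [h] at hcon; linarith
  have hgap : ℓ (j+1) ≤ ℓ j + p :=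
    hnext _ ⟨a1, b1 + 1, ha1, by linarith, by rw [he1]; ring⟩ (by linarith)
  refine ⟨ℓ j, ℓ (j+1), hlt, ?_, rfl⟩
  intro n hn1 hn2
  have hn : n < ((u * n) % p) * q := by
    by_contra h
    have := hnext n (hB n (not_lt.1 h)) hn1
    linarith
  have hAj := hA _ a1 b1 ha1 hb1 he1
  have hAk := hA _ a2 b2 ha2 hb2 he2
  apply max_lt
  · exact lt_of_mul_lt_mul_right (by linarith) hq0.le
  · by_contra h
    rcases (not_lt.1 h).lt_or_eq with h | h
    · have : ((u * n) % p + 1) * q ≤ ((u * ℓ (j+1)) % p) * q :=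
        mul_le_mul_of_nonneg_right h hq0.le
      linarith
    · have hd : p ∣ u * ℓ (j+1) - u * n := (Int.modEq_iff_dvd).1 h
      obtain ⟨d, hd⟩ := hd
      have : p ∣ ℓ (j+1) - n := ⟨q * d - c * (ℓ (j+1) - n), by
        linear_combination q * hd - (ℓ (j+1) - n) * hc⟩
      have := Int.le_of_dvd (by linarith) this
      linarith
end

section
/- Let u = x₁ be the multiplicative inverse of q modulo p with 0 < u < p. Then D_Δ(p,u) ⊆ S_Δ(p,q); that is, for every pair (a,b) satisfying condition (4), there exist consecutive elements ℓ_j < ℓ_{j+1} of S(p,q) with ℓ_{j+1} − ℓ_j = b − a. -/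
theorem aux_dvd_s17 (p q u n : ℤ) (huq : (q * u) % p = 1) : p ∣ n - q * ((u * n) % p) := by
  have h1 : p ∣ q * u - 1 := by
    have := Int.dvd_self_sub_emod (x := q * u) (m := p)
    rwa [huq] at this
  have h2 : p ∣ u * n - (u * n) % p := Int.dvd_self_sub_emod
  have : n - q * ((u * n) % p) = q * (u * n - (u * n) % p) - n * (q * u - 1) := by ring
  rw [this]
  exact dvd_sub (Dvd.dvd.mul_left h2 _) (Dvd.dvd.mul_left h1 _)

theorem aux_mem (p q u n : ℤ) (hp : 0 < p) (huq : (q * u) % p = 1)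
    (h : q * ((u * n) % p) ≤ n) : ∃ a b : ℤ, 0 ≤ a ∧ 0 ≤ b ∧ n = a * q + b * p := by
  obtain ⟨c, hc⟩ := aux_dvd_s17 p q u n huq
  refine ⟨(u * n) % p, c, Int.emod_nonneg _ hp.ne', ?_, by linarith⟩
  by_contra hneg
  push Not at hneg
  nlinarith

theorem aux_le (p q u n : ℤ) (hp : 0 < p) (hq : 0 < q) (huq : (q * u) % p = 1)
    (h : ∃ a b : ℤ, 0 ≤ a ∧ 0 ≤ b ∧ n = a * q + b * p) : q * ((u * n) % p) ≤ n := by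
  obtain ⟨x, y, hx, hy, rfl⟩ := h
  have h1 : p ∣ q * u - 1 := by
    have := Int.dvd_self_sub_emod (x := q * u) (m := p)
    rwa [huq] at this
  have h2 : (u * (x * q + y * p)) % p = x % p := by
    apply Int.emod_emod_of_dvd _ (dvd_refl p) |>.symm.trans
    rw [Int.emod_emod_of_dvd _ (dvd_refl p)]
    apply Int.emod_eq_emod_iff_emod_sub_eq_zero.mpr
    apply Int.emod_eq_zero_of_dvd
    have : u * (x * q + y * p) - x = x * (q * u - 1) + u * y * p := by ring
    rw [this]
    exact dvd_add (Dvd.dvd.mul_left h1 _) (Dvd.intro_left _ rfl)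
  rw [h2]
  have h3 : x % p ≤ x := by
    have e := Int.emod_add_mul_ediv x p
    have g := mul_nonneg hp.le (Int.ediv_nonneg hx hp.le)
    linarith
  nlinarith [mul_nonneg hy hp.le]

theorem aux_res (p u a n : ℤ) (h : p ∣ n - a) (k : ℤ) : (u * (n + k)) % p = (u * (a + k)) % p := by
  apply Int.emod_eq_emod_iff_emod_sub_eq_zero.mpr
  apply Int.emod_eq_zero_of_dvd
  have : u * (n + k) - u * (a + k) = u * (n - a) := by ring
  rw [this]
  exact Dvd.dvd.mul_left h _

/-- Lemma 15: with `u = x₁` the inverse of `q` mod `p`, `D_Δ(p,u) ⊆ S_Δ(p,q)`: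
for every pair `(a,b)` satisfying condition (4) there are consecutive elements
`ℓ_j < ℓ_{j+1}` of `S(p,q)` with `ℓ_{j+1} - ℓ_j = b - a`. -/
theorem stmt_17 (p q : ℤ) (hp : 3 ≤ p) (hpq : p < q) (hcop : IsCoprime p q)
    (θ : ℕ) (hθ : (θ : ℤ) * 2 = (p - 1) * (q - 1))
    (ℓ : ℕ → ℤ)
    (hℓmem : ∀ j : ℕ, j ≤ θ →
      (∃ a b : ℤ, 0 ≤ a ∧ 0 ≤ b ∧ ℓ j = a * q + b * p) ∧
      0 ≤ ℓ j ∧ ℓ j ≤ (p - 1) * (q - 1))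
    (hℓsurj : ∀ m : ℤ, (∃ a b : ℤ, 0 ≤ a ∧ 0 ≤ b ∧ m = a * q + b * p) →
      0 ≤ m → m ≤ (p - 1) * (q - 1) → ∃ j : ℕ, j ≤ θ ∧ ℓ j = m)
    (hℓmono : ∀ i j : ℕ, i < j → j ≤ θ → ℓ i < ℓ j)
    (u : ℤ) (hu0 : 0 < u) (hup : u < p) (huq : (q * u) % p = 1) :
    ∀ a b : ℤ, a < b →
      (∀ n : ℤ, a < n → n < b → max ((u * a) % p) ((u * b) % p) < (u * n) % p) →
      ∃ j : ℕ, j < θ ∧ ℓ (j + 1) - ℓ j = b - a := by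
  have hp0 : 0 < p := by linarith
  have hq0 : 0 < q := by linarith
  -- consecutive elements
  have key : ∀ m d : ℤ, 0 < d → 0 ≤ m → m + d ≤ (p - 1) * (q - 1) →
      q * ((u * m) % p) ≤ m → q * ((u * (m + d)) % p) ≤ m + d →
      (∀ k : ℤ, 0 < k → k < d → m + k < q * ((u * (m + k)) % p)) →
      ∃ j : ℕ, j < θ ∧ ℓ (j + 1) - ℓ j = d := by
    intro m d hd hm hmd h1 h2 h3
    obtain ⟨i, hi, him⟩ := hℓsurj m (aux_mem p q u m hp0 huq h1) hm (by linarith)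
    obtain ⟨j, hj, hjm⟩ := hℓsurj (m + d) (aux_mem p q u _ hp0 huq h2) (by linarith) hmd
    have hij : i < j := by
      by_contra hcon
      push Not at hcon
      rcases hcon.lt_or_eq with hlt | heq
      · have := hℓmono j i hlt hi
        linarith
      · subst heq
        linarith
    have hlt : ℓ i < ℓ (i + 1) := hℓmono i (i + 1) (by omega) (by omega)
    refine ⟨i, by omega, ?_⟩
    by_cases hij1 : i + 1 = j
    · rw [hij1]
      linarith
    · exfalso
      have hlt2 : ℓ (i + 1) < ℓ j := hℓmono (i + 1) j (by omega) hj
      have h4 := aux_le p q u _ hp0 hq0 huq (hℓmem (i + 1) (by omega)).1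
      have h5 := h3 (ℓ (i + 1) - m) (by linarith) (by linarith)
      rw [show m + (ℓ (i + 1) - m) = ℓ (i + 1) by ring] at h5
      linarith
  intro a b hab hcond
  have hA0 := Int.emod_nonneg (u * a) hp0.ne'
  have hB0 := Int.emod_nonneg (u * b) hp0.ne'
  by_cases hd1 : b = a + 1
  · -- difference one
    have hqu : p ∣ q * u - 1 := by
      have := Int.dvd_self_sub_emod (x := q * u) (m := p)
      rwa [huq] at this
    rw [show b - a = 1 by linarith]
    by_cases hu : u = p - 1
    · have hq1 : p ∣ q + 1 := by
        have : q + 1 = q * p - (q * u - 1) := by rw [hu]; ring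
        rw [this]
        exact dvd_sub (Dvd.intro_left _ rfl) hqu
      apply key q 1 one_pos hq0.le (by nlinarith)
      · rw [mul_comm u q, huq]
        linarith
      · rw [Int.emod_eq_zero_of_dvd (Dvd.dvd.mul_left hq1 _)]
        linarith
      · intro k h1 h2
        omega
    · have hu2 : u ≤ p - 2 := by omega
      apply key (q * u - 1) 1 one_pos (by nlinarith) (by nlinarith)
      · rw [Int.emod_eq_zero_of_dvd (Dvd.dvd.mul_left hqu _)]
        nlinarith
      · have : (u * (q * u - 1 + 1)) % p = u := by
          have h := aux_res p u 0 (q * u - 1) (by simpa using hqu) 1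
          rw [h]
          simp only [zero_add, mul_one]
          exact Int.emod_eq_of_lt hu0.le hup
        rw [this]
        linarith
      · intro k h1 h2
        omega
  · have hdp : b - a ≤ p := by
      by_contra hcon
      push Not at hcon
      have h1 := hcond (a + p) (by linarith) (by linarith)
      have h2 : (u * (a + p)) % p = (u * a) % p := by
        rw [mul_add, Int.add_mul_emod_self_right]
      rw [h2] at h1
      exact absurd (le_max_left _ _) (not_le.mpr h1)
    have hc1 : ∀ k : ℤ, 0 < k → k < b - a → (u * a) % p + 1 ≤ (u * (a + k)) % p ∧
        (u * b) % p + 1 ≤ (u * (a + k)) % p := by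
      intro k h1 h2
      have h := hcond (a + k) (by linarith) (by linarith)
      exact ⟨(max_lt_iff.mp h).1, (max_lt_iff.mp h).2⟩
    -- reduction
    have fin : ∀ m : ℤ, p ∣ m - a → q * ((u * a) % p) ≤ m → q * ((u * b) % p) ≤ m + (b - a) →
        (∀ k : ℤ, 0 < k → k < b - a → m + k < q * ((u * (a + k)) % p)) →
        ∃ j : ℕ, j < θ ∧ ℓ (j + 1) - ℓ j = b - a := by
      intro m hma h1 h2 h3
      have hr := aux_res p u a m hma
      have hr0 := hr 0
      simp only [add_zero] at hr0
      apply key m (b - a) (by linarith) (by nlinarith)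
      · have h4 := h3 (b - a - 1) (by omega) (by omega)
        rw [← hr] at h4
        obtain ⟨c, hc⟩ := aux_dvd_s17 p q u (m + (b - a - 1)) huq
        have hlt := Int.emod_lt_of_pos (u * (m + (b - a - 1))) hp0
        have hc1 : c ≤ -1 := by
          by_contra hcon
          push Not at hcon
          have : 0 ≤ c := by omega
          nlinarith
        nlinarith
      · rw [hr0]
        exact h1
      · rw [hr, show a + (b - a) = b by ring]
        exact h2
      · intro k hk1 hk2
        rw [hr]
        exact h3 k hk1 hk2
    rcases le_or_gt ((u * b) % p) ((u * a) % p) with hBA | hAB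
    · apply fin (q * ((u * a) % p))
      · exact (dvd_sub_comm).mp (aux_dvd_s17 p q u a huq)
      · exact le_refl _
      · nlinarith
      · intro k hk1 hk2
        have := (hc1 k hk1 hk2).1
        nlinarith
    · apply fin (q * ((u * b) % p) - (b - a))
      · have := (dvd_sub_comm).mp (aux_dvd_s17 p q u b huq)
        rwa [show q * ((u * b) % p) - (b - a) - a = q * ((u * b) % p) - b by ring]
      · nlinarith
      · linarith
      · intro k hk1 hk2
        have := (hc1 k hk1 hk2).2
        nlinarith
end

section
/- (Theorem 2) Define G_i(p,q) = {r_{i−1} − z·r_i − 1 : 0 ≤ z ≤ Z_i − 1} for 1 ≤ i ≤ t−1, and G_t(p,q) = {r_{t−1} − z·r_t − 1 : 0 ≤ z ≤ Z_t − 2} = {1, 2, ..., r_{t−1} − 1}. Then the gapset of the binary inclusion-exclusion polynomial satisfies G(p,q) = ⋃_{i=1}^{t} G_i(p,q), and its cardinality is #G(p,q) = Σ_{i=1}^{t} ⌊r_{i−1}/r_i⌋ − 1. -/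
def CC (a b d : ℤ) : Prop := ∃ x y : ℤ, 0 ≤ x ∧ 0 ≤ y ∧ d = x * a - y * b ∧ 0 < d ∧
  ∀ x' y' : ℤ, 0 ≤ x' → x' ≤ x → 0 ≤ y' → y' ≤ y → 0 < x' * a - y' * b → d ≤ x' * a - y' * b

def EE (a b d : ℤ) : Prop := CC a b d ∨ CC b a d

lemma EE_comm (a b d : ℤ) : EE a b d ↔ EE b a d := by
  unfold EE; exact or_comm

lemma CC_self {a b : ℤ} (ha : 0 < a) : CC a b a := by
  refine ⟨1, 0, by norm_num, le_refl _, by ring, ha, ?_⟩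
  intro x' y' h1 h2 h3 h4 h5
  have : y' = 0 := by omega
  subst this
  have : x' = 0 ∨ x' = 1 := by omega
  rcases this with rfl | rfl <;> simp at *

lemma EE_step {a b : ℤ} (d : ℤ) (hb : 0 < b) (hab : b ≤ a) :
    EE a b d ↔ d = a ∨ EE (a - b) b d := by
  constructor
  · rintro (⟨x, y, hx, hy, hd, hd0, H⟩ | ⟨x, y, hx, hy, hd, hd0, H⟩)
    · rcases le_or_gt x y with hxy | hxy
      · right; left
        refine ⟨x, y - x, hx, by omega, by rw [hd]; ring, hd0, ?_⟩
        intro x' y' h1 h2 h3 h4 h5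
        have := H x' (y' + x') h1 h2 (by omega) (by omega) (by linarith)
        linarith
      · left
        have h1 := H 1 0 (by norm_num) (by omega) le_rfl hy (by linarith)
        have : a ≤ d := by
          rw [hd]
          nlinarith
        linarith
    · have hxy : y ≤ x := by
        by_contra h
        push Not at h
        nlinarith
      right; right
      refine ⟨x - y, y, by omega, hy, by rw [hd]; ring, hd0, ?_⟩
      intro x' y' h1 h2 h3 h4 h5
      have := H (x' + y') y' (by omega) (by omega) h3 h4 (by linarith)
      linarith
  · rintro (rfl | ⟨x, y, hx, hy, hd, hd0, H⟩ | ⟨x, y, hx, hy, hd, hd0, H⟩)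
    · left; exact CC_self (by omega)
    · left
      have hx1 : 1 ≤ x := by
        by_contra h
        have : x = 0 := by omega
        subst this
        nlinarith
      have hab' : 0 < a - b := by
        by_contra h
        have : a - b = 0 := by omega
        rw [this] at hd
        nlinarith
      have hda := H 1 0 (by norm_num) hx1 le_rfl hy (by linarith)
      refine ⟨x, x + y, hx, by omega, by rw [hd]; ring, hd0, ?_⟩
      intro x' y' h1 h2 h3 h4 h5
      rcases lt_or_ge y' x' with hlt | hge
      · nlinarith
      · rcases le_or_gt (y' - x') y with h6 | h6
        · have := H x' (y' - x') h1 h2 (by omega) h6 (by linarith)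
          linarith
        · have h7 : x' * (a - b) - y * b > x' * a - y' * b := by nlinarith
          have h8 := H x' y h1 h2 hy le_rfl (by linarith)
          have : x ≤ x' := by
            by_contra hh
            push Not at hh
            nlinarith
          omega
    · right
      refine ⟨x + y, y, by omega, hy, by rw [hd]; ring, hd0, ?_⟩
      intro x' y' h1 h2 h3 h4 h5
      have hxy : y' ≤ x' := by
        by_contra h
        push Not at h
        nlinarith
      rcases le_or_gt (x' - y') x with h6 | h6
      · have := H (x' - y') y' (by omega) h6 h3 h4 (by linarith)
        linarith
      · rw [hd]; nlinarith

lemma EE_zero {b : ℤ} (d : ℤ) (hb : 0 < b) : EE 0 b d ↔ d = b := by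
  constructor
  · rintro (⟨x, y, hx, hy, hd, hd0, H⟩ | ⟨x, y, hx, hy, hd, hd0, H⟩)
    · nlinarith
    · have hx1 : 1 ≤ x := by
        by_contra h
        have : x = 0 := by omega
        subst this
        nlinarith
      have hda := H 1 0 (by norm_num) hx1 le_rfl hy (by linarith)
      nlinarith
  · rintro rfl
    right; exact CC_self hb

lemma EE_iter {b c : ℤ} (d : ℤ) (hb : 0 < b) (hc : 0 ≤ c) (k : ℕ) :
    EE (k * b + c) b d ↔ (∃ z : ℕ, z < k ∧ d = k * b + c - z * b) ∨ EE c b d := by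
  induction k with
  | zero => simp
  | succ k ih =>
    rw [EE_step d hb (by push_cast; nlinarith [Int.natCast_nonneg k])]
    have : ((k + 1 : ℕ) : ℤ) * b + c - b = k * b + c := by push_cast; ring
    rw [this, ih]
    constructor
    · rintro (h | ⟨z, hz, h⟩ | h)
      · left; exact ⟨0, by omega, by rw [h]; simp⟩
      · left; exact ⟨z + 1, by omega, by rw [h]; push_cast; ring⟩
      · right; exact h
    · rintro (⟨z, hz, h⟩ | h)
      · rcases z with _ | z
        · left; rw [h]; simp
        · right; left; exact ⟨z, by omega, by rw [h]; push_cast; ring⟩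
      · right; right; exact h

lemma EE_chain (t : ℕ) (ht : 1 ≤ t) (r Z : ℕ → ℕ)
    (hrec : ∀ i, 1 ≤ i → i ≤ t → r (i - 1) = Z i * r i + r (i + 1) ∧ r (i + 1) < r i)
    (hrt : r t = 1) (hZt : 1 ≤ Z t) (d : ℤ) (n : ℕ) : ∀ i, 1 ≤ i → i + n = t →
    (EE (r (i - 1)) (r i) d ↔ ∃ j, i ≤ j ∧ j ≤ t ∧ ∃ z : ℕ, z < Z j ∧
      d = (r (j - 1) : ℤ) - z * r j) := by
  induction n with
  | zero =>
    intro i h1 h2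
    have : i = t := by omega
    subst this
    obtain ⟨e1, e2⟩ := hrec i h1 le_rfl
    have h0 : r (i + 1) = 0 := by omega
    have e1' : (r (i - 1) : ℤ) = Z i * (r i : ℤ) + 0 := by rw [e1, h0]; push_cast; ring
    rw [e1', EE_iter d (by omega) le_rfl, EE_zero d (by omega)]
    constructor
    · rintro (⟨z, hz, h⟩ | h)
      · exact ⟨i, le_rfl, le_rfl, z, hz, by rw [h, e1']⟩
      · refine ⟨i, le_rfl, le_rfl, Z i - 1, by omega, ?_⟩
        rw [h, e1', hrt]; push_cast [hZt]; ring
    · rintro ⟨j, h3, h4, z, hz, h⟩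
      have : j = i := by omega
      subst this
      left; exact ⟨z, hz, by rw [h, e1']⟩
  | succ n ih =>
    intro i h1 h2
    obtain ⟨e1, e2⟩ := hrec i h1 (by omega)
    have e1' : (r (i - 1) : ℤ) = Z i * (r i : ℤ) + r (i + 1) := by rw [e1]; push_cast; ring
    have := ih (i + 1) (by omega) (by omega)
    rw [Nat.add_sub_cancel] at this
    rw [e1', EE_iter d (by omega) (by omega), EE_comm, this]
    constructor
    · rintro (⟨z, hz, h⟩ | ⟨j, h3, h4, h⟩)
      · exact ⟨i, le_rfl, by omega, z, hz, by rw [h, e1']⟩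
      · exact ⟨j, by omega, h4, h⟩
    · rintro ⟨j, h3, h4, z, hz, h⟩
      rcases Nat.eq_or_lt_of_le h3 with rfl | h5
      · left; exact ⟨z, hz, by rw [h, e1']⟩
      · right; exact ⟨j, h5, h4, z, hz, h⟩

/-- the semigroup -/
def SG (p q n : ℤ) : Prop := ∃ x y : ℤ, 0 ≤ x ∧ 0 ≤ y ∧ n = x * p + y * q

lemma SG_gap {p q : ℤ} (hp : 0 < p) (hpq : p < q) (d : ℤ) :
    (∃ s, SG p q s ∧ SG p q (s + d) ∧ 0 < d ∧ ∀ n, s < n → n < s + d → ¬ SG p q n) ↔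
      (d ≤ p ∧ EE p q d) := by
  constructor
  · rintro ⟨s, ⟨α, β, hα, hβ, hs⟩, ⟨α', β', hα', hβ', hs'⟩, hd, H⟩
    have hdp : d ≤ p := by
      by_contra h
      exact H (s + p) (by omega) (by omega) ⟨α + 1, β, by omega, hβ, by rw [hs]; ring⟩
    refine ⟨hdp, ?_⟩
    have hd' : d = (α' - α) * p + (β' - β) * q := by linarith
    have key : ∀ u v : ℤ, -α ≤ u → -β ≤ v → 0 < u * p + v * q → d ≤ u * p + v * q := by
      intro u v hu hv h
      by_contra h'
      exact H (s + (u * p + v * q)) (by omega) (by omega)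
        ⟨α + u, β + v, by omega, by omega, by rw [hs]; ring⟩
    rcases le_or_gt α α' with h1 | h1
    · rcases le_or_gt β' β with h2 | h2
      · left
        refine ⟨α' - α, β - β', by omega, by omega, by rw [hd']; ring, hd, ?_⟩
        intro x' y' k1 k2 k3 k4 k5
        have := key x' (-y') (by omega) (by omega) (by linarith)
        linarith
      · exfalso; nlinarith
    · right
      have h2 : β ≤ β' := by
        by_contra h
        push Not at h
        nlinarith
      refine ⟨β' - β, α - α', by omega, by omega, by rw [hd']; ring, hd, ?_⟩
      intro x' y' k1 k2 k3 k4 k5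
      have := key (-y') x' (by omega) (by omega) (by linarith)
      linarith
  · rintro ⟨hdp, ⟨x, y, hx, hy, hd, hd0, H⟩ | ⟨x, y, hx, hy, hd, hd0, H⟩⟩
    · refine ⟨y * q, ⟨0, y, le_rfl, hy, by ring⟩, ⟨x, 0, hx, le_rfl, by rw [hd]; ring⟩, hd0, ?_⟩
      rintro n h1 h2 ⟨u, v, hu, hv, rfl⟩
      rcases le_or_gt v y with h3 | h3
      · have hux : u ≤ x := by
          by_contra h
          push Not at h
          nlinarith
        have := H u (y - v) hu hux (by omega) (by omega) (by linarith)
        linarith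
      · nlinarith
    · refine ⟨y * p, ⟨y, 0, hy, le_rfl, by ring⟩, ⟨0, x, le_rfl, hx, by rw [hd]; ring⟩, hd0, ?_⟩
      rintro n h1 h2 ⟨u, v, hu, hv, rfl⟩
      rcases le_or_gt u y with h3 | h3
      · have hux : v ≤ x := by
          by_contra h
          push Not at h
          nlinarith
        have := H v (y - u) hv hux (by omega) (by omega) (by linarith)
        linarith
      · nlinarith

lemma SG_norm {p q : ℤ} (hp : 0 < p) (hc : IsCoprime p q) (n : ℤ) :
    ∃ x y : ℤ, 0 ≤ y ∧ y < p ∧ n = x * p + y * q := by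
  obtain ⟨a, b, hab⟩ := hc
  refine ⟨n * a + (n * b / p) * q, n * b % p, Int.emod_nonneg _ hp.ne', Int.emod_lt_of_pos _ hp, ?_⟩
  have h := Int.emod_add_mul_ediv (n * b) p
  have : n * b % p = n * b - p * (n * b / p) := by linarith
  rw [this]
  linear_combination -n * hab

lemma SG_iff {p q : ℤ} (hp : 0 < p) (hq : 0 < q) (hc : IsCoprime p q) {x y : ℤ} (hy : 0 ≤ y)
    (hyp : y < p) : SG p q (x * p + y * q) ↔ 0 ≤ x := by
  constructor
  · rintro ⟨u, v, hu, hv, h⟩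
    have h1 : p ∣ (y - v) * q := ⟨u - x, by linarith⟩
    obtain ⟨k, hk⟩ := hc.dvd_of_dvd_mul_right h1
    have hk' : k ≤ 0 := by
      by_contra h
      push Not at h
      nlinarith
    have h2 : v = y - p * k := by linarith
    subst h2
    have h3 : x = u - k * q := by
      have : p * (x - (u - k * q)) = 0 := by linarith
      rcases mul_eq_zero.1 this with h | h <;> omega
    nlinarith
  · intro hx; exact ⟨x, y, hx, hy, rfl⟩

lemma SG_symm {p q : ℤ} (hp : 0 < p) (hq : 0 < q) (hc : IsCoprime p q) (n : ℤ) :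
    SG p q (p * q - p - q - n) ↔ ¬ SG p q n := by
  obtain ⟨x, y, hy, hyp, rfl⟩ := SG_norm hp hc n
  have : p * q - p - q - (x * p + y * q) = (-1 - x) * p + (p - 1 - y) * q := by ring
  rw [this, SG_iff hp hq hc (by omega) (by omega), SG_iff hp hq hc hy hyp]
  omega

lemma SG_nonneg {p q : ℤ} (hp : 0 < p) (hq : 0 < q) {n : ℤ} (h : SG p q n) : 0 ≤ n := by
  obtain ⟨x, y, hx, hy, rfl⟩ := h
  positivity

open Classical in
lemma coeff_Q (p q : ℕ) (hp : 0 < p) (hq : 0 < q) (hcop : Nat.Coprime p q)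
    (Q : Polynomial ℤ)
    (hQ : Q * ((1 - Polynomial.X ^ p) * (1 - Polynomial.X ^ q)) =
      (1 - Polynomial.X ^ (p * q)) * (1 - Polynomial.X)) (n : ℕ) :
    Q.coeff n = (if SG p q n then 1 else 0) - (if SG p q ((n : ℤ) - 1) then 1 else 0) := by
  have hp' : (0 : ℤ) < p := by exact_mod_cast hp
  have hq' : (0 : ℤ) < q := by exact_mod_cast hq
  have hc : IsCoprime (p : ℤ) q := Nat.isCoprime_iff_coprime.2 hcop
  have hneg : ∀ m : ℤ, m < 0 → ¬ SG p q m := fun m hm h => by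
    have := SG_nonneg hp' hq' h
    omega
  set H : PowerSeries ℤ := PowerSeries.mk (fun n => if SG p q n then (1 : ℤ) else 0) with hH
  have hcoef : ∀ (k n : ℕ), PowerSeries.coeff n (H * (1 - PowerSeries.X ^ k)) =
      (if SG p q n then 1 else 0) - (if SG p q ((n : ℤ) - k) then 1 else 0) := by
    intro k n
    rw [mul_sub, mul_one, map_sub, PowerSeries.coeff_mul_X_pow', hH, PowerSeries.coeff_mk,
      PowerSeries.coeff_mk]
    congr 1
    split_ifs with h1 h2 h3 h3 h3
    · rfl
    · rw [Nat.cast_sub h1] at h2; contradiction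
    · rw [Nat.cast_sub h1] at h2; contradiction
    · rfl
    · exact absurd h3 (hneg _ (by omega))
    · rfl
  have h1 : H * (1 - PowerSeries.X ^ p) = ∑ j ∈ Finset.range p, (PowerSeries.X ^ q) ^ j := by
    ext n
    rw [hcoef, map_sum]
    simp_rw [← pow_mul, PowerSeries.coeff_X_pow]
    obtain ⟨x, y, hy, hyp, hn⟩ := SG_norm hp' hc n
    have e : (n : ℤ) - p = (x - 1) * p + y * q := by rw [hn]; ring
    rw [e, SG_iff hp' hq' hc hy hyp, hn, SG_iff hp' hq' hc hy hyp]
    have hj : ∀ j ∈ Finset.range p, (n = q * j ↔ x = 0 ∧ j = y.toNat) := by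
      intro j hj
      rw [Finset.mem_range] at hj
      constructor
      · intro h
        have hh : x * p + y * q = (0 : ℤ) * p + (j : ℤ) * q := by rw [← hn, h]; push_cast; ring
        have a1 := (SG_iff hp' hq' hc (x := x) hy hyp).1
          (by rw [hh]; exact ⟨0, j, by omega, by omega, rfl⟩)
        have hh2 : (-x) * p + (j : ℤ) * q = 0 * p + y * q := by linarith
        have a2 := (SG_iff hp' hq' hc (x := -x) (y := j) (by omega) (by omega)).1
          (by rw [hh2]; exact ⟨0, y, by omega, by omega, rfl⟩)
        have hx0 : x = 0 := by omega
        subst hx0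
        have : (y - j) * q = 0 := by linarith
        rcases mul_eq_zero.1 this with h | h <;> omega
      · rintro ⟨rfl, rfl⟩
        zify
        rw [Int.toNat_of_nonneg hy, hn]; ring
    rw [Finset.sum_congr rfl (fun j hj' => by rw [if_congr (hj j hj') rfl rfl])]
    by_cases hx : x = 0
    · subst hx
      simp
      omega
    · simp only [hx, false_and, if_false, Finset.sum_const_zero]
      split_ifs <;> omega
  have h2 : H * ((1 - PowerSeries.X ^ p) * (1 - PowerSeries.X ^ q)) =
      1 - PowerSeries.X ^ (p * q) := by
    rw [← mul_assoc, h1, geom_sum_mul_neg, ← pow_mul, mul_comm q p]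
  have h3 := congrArg (Polynomial.coeToPowerSeries.ringHom (R := ℤ)) hQ
  simp only [map_mul, map_sub, map_one, map_pow, Polynomial.coeToPowerSeries.ringHom_apply,
    Polynomial.coe_X] at h3
  have hne : ∀ k : ℕ, 0 < k → (1 - PowerSeries.X ^ k : PowerSeries ℤ) ≠ 0 := by
    intro k hk h
    have := congrArg (PowerSeries.coeff 0) h
    simp [PowerSeries.coeff_X_pow, hk.ne'] at this
  have h4 : (Q : PowerSeries ℤ) = H * (1 - PowerSeries.X ^ 1) := by
    apply mul_right_cancel₀ (mul_ne_zero (hne p hp) (hne q hq))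
    rw [h3, ← h2]; ring
  rw [← Polynomial.coeff_coe, h4, hcoef]
  simp

lemma gap_iff (p q : ℕ) (hp : 0 < p) (hpq : p < q) (hcop : Nat.Coprime p q)
    (Q : Polynomial ℤ)
    (hQ : Q * ((1 - Polynomial.X ^ p) * (1 - Polynomial.X ^ q)) =
      (1 - Polynomial.X ^ (p * q)) * (1 - Polynomial.X)) (d : ℕ) :
    (∃ a b : ℕ, a ∈ Q.support ∧ b ∈ Q.support ∧ a < b ∧
        (∀ c ∈ Q.support, ¬ (a < c ∧ c < b)) ∧ d = b - a) ↔
      (1 ≤ d ∧ ((d : ℤ) + 1 ≤ p ∧ EE p q ((d : ℤ) + 1))) := by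
  have hp' : (0 : ℤ) < p := by exact_mod_cast hp
  have hq' : (0 : ℤ) < q := by omega
  have hc : IsCoprime (p : ℤ) q := Nat.isCoprime_iff_coprime.2 hcop
  have hsupp : ∀ n : ℕ, n ∈ Q.support ↔ ¬ (SG p q n ↔ SG p q ((n : ℤ) - 1)) := by
    intro n
    rw [Polynomial.mem_support_iff, coeff_Q p q hp (by omega) hcop Q hQ]
    by_cases h1 : SG p q n <;> by_cases h2 : SG p q ((n : ℤ) - 1) <;> simp [h1, h2]
  rw [← SG_gap hp' (by omega)]
  constructor
  · rintro ⟨a, b, ha, hb, hab, H, rfl⟩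
    refine ⟨by omega, ?_⟩
    have hconst : ∀ k : ℕ, a + k < b → (SG p q ((a + k : ℕ) : ℤ) ↔ SG p q a) := by
      intro k
      induction k with
      | zero => intro _; simp
      | succ k ih =>
        intro hk
        rw [← ih (by omega)]
        by_contra h
        apply H (a + (k + 1)) _ ⟨by omega, hk⟩
        rw [hsupp]
        have : (((a + (k + 1) : ℕ) : ℤ) - 1) = ((a + k : ℕ) : ℤ) := by push_cast; ring
        rw [this]; exact h
    have hconst' : ∀ n : ℤ, a ≤ n → n < b → (SG p q n ↔ SG p q a) := by
      intro n h1 h2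
      have := hconst (n - a).toNat (by omega)
      rwa [show ((a + (n - a).toNat : ℕ) : ℤ) = n by omega] at this
    rw [hsupp] at ha hb
    rw [hconst' ((b : ℤ) - 1) (by omega) (by omega)] at hb
    have hcast : ((b - a : ℕ) : ℤ) = b - a := by omega
    by_cases hSa : SG p q a
    · simp only [hSa, true_iff, iff_true] at ha hb
      refine ⟨p * q - p - q - b, (SG_symm hp' hq' hc _).2 hb, ?_, by omega, ?_⟩
      · have := (SG_symm hp' hq' hc _).2 ha
        rw [hcast]
        convert this using 1; ring
      · intro n h1 h2
        have := (SG_symm hp' hq' hc (p * q - p - q - n)).1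
        rw [sub_sub_cancel] at this
        intro h
        exact this h ((hconst' _ (by linarith) (by linarith)).2 hSa)
    · simp only [hSa, false_iff, iff_false, not_not] at ha hb
      refine ⟨a - 1, ha, ?_, by omega, ?_⟩
      · rw [hcast]; convert hb using 1; ring
      · intro n h1 h2
        rw [hconst' n (by omega) (by omega)]; exact hSa
  · rintro ⟨hd, s, h1, h2, -, H⟩
    have hs := SG_nonneg hp' hq' h1
    lift s to ℕ using hs
    refine ⟨s + 1, s + 1 + d, ?_, ?_, by omega, ?_, by omega⟩
    · rw [hsupp]
      have a1 := H ((s + 1 : ℕ) : ℤ) (by push_cast; omega) (by push_cast; omega)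
      have : ((s + 1 : ℕ) : ℤ) - 1 = s := by push_cast; ring
      rw [this]
      tauto
    · rw [hsupp]
      have a1 := H (((s + 1 + d : ℕ) : ℤ) - 1) (by push_cast; omega) (by push_cast; omega)
      have : ((s + 1 + d : ℕ) : ℤ) = s + (d + 1) := by push_cast; ring
      rw [this] at a1 ⊢
      tauto
    · rintro c hcc ⟨c1, c2⟩
      rw [hsupp] at hcc
      have a1 := H (c : ℤ) (by omega) (by omega)
      have a2 := H ((c : ℤ) - 1) (by omega) (by omega)
      tauto

open Polynomial in
/-- Theorem 2: the gapset `G(p,q)` of the binary inclusion–exclusion polynomial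
`Q_{p,q}` (gaps between consecutive exponents occurring in `Q_{p,q}`) equals the
union `⋃_{i=1}^t G_i(p,q)`, where `G_i(p,q) = {r_{i-1} - z·r_i - 1 : 0 ≤ z ≤ Z_i - 1}`
for `1 ≤ i ≤ t-1` and `G_t(p,q) = {r_{t-1} - z·r_t - 1 : 0 ≤ z ≤ Z_t - 2}
= {1,…,r_{t-1}-1}`; moreover `#G(p,q) = Σ_{i=1}^t ⌊r_{i-1}/r_i⌋ - 1`. -/
theorem stmt_18 (p q : ℕ) (hp : 3 ≤ p) (hpq : p < q) (hcop : Nat.Coprime p q)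
    (Q : Polynomial ℤ)
    (hQ : Q * ((1 - X ^ p) * (1 - X ^ q)) = (1 - X ^ (p * q)) * (1 - X))
    (t : ℕ) (ht : 1 ≤ t) (r Z : ℕ → ℕ)
    (hr0 : r 0 = p) (hr1 : r 1 = q % p)
    (hrec : ∀ i, 1 ≤ i → i ≤ t → r (i - 1) = Z i * r i + r (i + 1) ∧ r (i + 1) < r i)
    (hrt : r t = 1) :
    {d : ℕ | ∃ a b : ℕ, a ∈ Q.support ∧ b ∈ Q.support ∧ a < b ∧
        (∀ c ∈ Q.support, ¬ (a < c ∧ c < b)) ∧ d = b - a} =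
      (⋃ i ∈ Set.Icc 1 (t - 1),
        {d : ℕ | ∃ z : ℕ, z ≤ Z i - 1 ∧ d = r (i - 1) - z * r i - 1}) ∪
      {d : ℕ | ∃ z : ℕ, z ≤ Z t - 2 ∧ d = r (t - 1) - z * r t - 1} ∧
    {d : ℕ | ∃ z : ℕ, z ≤ Z t - 2 ∧ d = r (t - 1) - z * r t - 1} =
      Set.Icc 1 (r (t - 1) - 1) ∧
    Set.ncard {d : ℕ | ∃ a b : ℕ, a ∈ Q.support ∧ b ∈ Q.support ∧ a < b ∧
        (∀ c ∈ Q.support, ¬ (a < c ∧ c < b)) ∧ d = b - a} =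
      (∑ i ∈ Finset.Icc 1 t, r (i - 1) / r i) - 1 := by
  have hlt : ∀ i, i < t → r (i + 1) < r i := by
    intro i hi
    rcases Nat.eq_zero_or_pos i with rfl | h
    · rw [zero_add, hr0, hr1]; exact Nat.mod_lt _ (by omega)
    · exact (hrec i h hi.le).2
  have hanti : ∀ n i, i + n ≤ t → r (i + n) ≤ r i := by
    intro n
    induction n with
    | zero => intro i _; simp
    | succ n ih =>
      intro i hi
      have a1 := ih i (by omega)
      have a2 := hlt (i + n) (by omega)
      rw [← add_assoc]; omega
  have hanti' : ∀ i j, i ≤ j → j ≤ t → r j ≤ r i := by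
    intro i j h1 h2
    have := hanti (j - i) i (by omega)
    rwa [Nat.add_sub_cancel' h1] at this
  have hpos : ∀ i, i ≤ t → 1 ≤ r i := by
    intro i hi
    have := hanti' i t hi le_rfl
    omega
  have h0 : r (t + 1) = 0 := by
    have := (hrec t ht le_rfl).2
    omega
  have hZt : Z t = r (t - 1) := by
    have := (hrec t ht le_rfl).1
    rw [h0, hrt] at this
    omega
  have hZt2 : 2 ≤ Z t := by
    have := hlt (t - 1) (by omega)
    rw [Nat.sub_add_cancel ht, hrt] at this
    omega
  have hZ : ∀ i, 1 ≤ i → i ≤ t → 1 ≤ Z i := by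
    intro i h1 h2
    by_contra h
    have h3 : Z i = 0 := by omega
    have := (hrec i h1 h2)
    rw [h3] at this
    have h4 := hlt (i - 1) (by omega)
    rw [Nat.sub_add_cancel h1] at h4
    omega
  have hbnd : ∀ i z, 1 ≤ i → i ≤ t → z < Z i → z * r i + r i + r (i + 1) ≤ r (i - 1) := by
    intro i z h1 h2 hz
    rw [(hrec i h1 h2).1]
    have : (z + 1) * r i ≤ Z i * r i := Nat.mul_le_mul_right _ hz
    linarith
  have hdiv : ∀ i ∈ Finset.Icc 1 t, r (i - 1) / r i = Z i := by
    intro i hi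
    rw [Finset.mem_Icc] at hi
    obtain ⟨a1, a2⟩ := hrec i hi.1 hi.2
    rw [a1, mul_comm, Nat.mul_add_div (hpos i hi.2), Nat.div_eq_of_lt a2, add_zero]
  have hmem : ∀ d : ℕ, (∃ a b : ℕ, a ∈ Q.support ∧ b ∈ Q.support ∧ a < b ∧
        (∀ c ∈ Q.support, ¬ (a < c ∧ c < b)) ∧ d = b - a) ↔
      1 ≤ d ∧ ∃ j, 1 ≤ j ∧ j ≤ t ∧ ∃ z : ℕ, z < Z j ∧ d = r (j - 1) - z * r j - 1 := by
    intro d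
    rw [gap_iff p q (by omega) hpq hcop Q hQ]
    have hch := EE_chain t ht r Z hrec hrt (by omega) ((d : ℤ) + 1) (t - 1) 1 le_rfl (by omega)
    have hq : ((q / p : ℕ) : ℤ) * (p : ℤ) + ((q % p : ℕ) : ℤ) = q := by
      exact_mod_cast Nat.div_add_mod' q p
    have hit := EE_iter (b := (p : ℤ)) (c := ((q % p : ℕ) : ℤ)) ((d : ℤ) + 1) (by omega) (by omega)
      (q / p)
    rw [hq] at hit
    rw [EE_comm, hit, EE_comm]
    rw [Nat.sub_self, hr0, hr1] at hch
    rw [hch]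
    have conv : ∀ j z : ℕ, 1 ≤ j → j ≤ t → z < Z j → 1 ≤ d →
        ((d : ℤ) + 1 = (r (j - 1) : ℤ) - z * r j ↔ d = r (j - 1) - z * r j - 1) := by
      intro j z h1 h2 h3 h4
      have := hbnd j z h1 h2 h3
      have := hpos j h2
      have e : (z : ℤ) * r j = ((z * r j : ℕ) : ℤ) := by push_cast; ring
      rw [e]
      generalize z * r j = w at *
      omega
    refine and_congr_right (fun hd => ?_)
    constructor
    · rintro ⟨h1, ⟨z, hz, h⟩ | ⟨j, h2, h3, z, hz, h⟩⟩
      · exfalso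
        have hr : 1 ≤ q % p := hr1 ▸ hpos 1 ht
        have : ((z : ℤ) + 1) * p ≤ ((q / p : ℕ) : ℤ) * p := by
          apply mul_le_mul_of_nonneg_right _ (by omega)
          omega
        have : (1 : ℤ) ≤ ((q % p : ℕ) : ℤ) := by exact_mod_cast hr
        linarith
      · exact ⟨j, h2, h3, z, hz, (conv j z h2 h3 hz hd).1 h⟩
    · rintro ⟨j, h2, h3, z, hz, h⟩
      have h' := (conv j z h2 h3 hz hd).2 h
      refine ⟨?_, Or.inr ⟨j, h2, h3, z, hz, h'⟩⟩
      have a1 := hanti' 0 (j - 1) (by omega) (by omega)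
      have : (0 : ℤ) ≤ z * r j := by positivity
      omega
  refine ⟨?_, ?_, ?_⟩
  · ext d
    rw [Set.mem_setOf_eq, hmem]
    simp only [Set.mem_union, Set.mem_iUnion, Set.mem_setOf_eq, Set.mem_Icc, exists_prop]
    constructor
    · rintro ⟨hd, j, h1, h2, z, hz, h⟩
      rcases Nat.eq_or_lt_of_le h2 with rfl | h3
      · right
        refine ⟨z, ?_, h⟩
        rw [hrt] at h
        omega
      · left
        exact ⟨j, ⟨h1, by omega⟩, z, by omega, h⟩
    · rintro (⟨j, ⟨h1, h2⟩, z, hz, h⟩ | ⟨z, hz, h⟩)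
      · have hz' : z < Z j := by have := hZ j h1 (by omega); omega
        refine ⟨?_, j, h1, by omega, z, hz', h⟩
        have a1 := hbnd j z h1 (by omega) hz'
        have a2 := hpos (j + 1) (by omega)
        have a3 := hpos j (by omega)
        omega
      · refine ⟨?_, t, ht, le_rfl, z, by omega, h⟩
        rw [hrt] at h
        omega
  · ext d
    simp only [Set.mem_setOf_eq, Set.mem_Icc, hrt]
    constructor
    · rintro ⟨z, hz, h⟩
      omega
    · rintro ⟨h1, h2⟩
      exact ⟨r (t - 1) - 1 - d, by omega, by omega⟩
  · let f : ℕ → ℕ → ℕ := fun i z => r (i - 1) - z * r i - 1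
    let F : Finset ℕ := (Finset.Icc 1 t).biUnion (fun i => (Finset.range (Z i)).image (f i))
    have hF : {d : ℕ | ∃ a b : ℕ, a ∈ Q.support ∧ b ∈ Q.support ∧ a < b ∧
        (∀ c ∈ Q.support, ¬ (a < c ∧ c < b)) ∧ d = b - a} = ((F.erase 0 : Finset ℕ) : Set ℕ) := by
      ext d
      rw [Set.mem_setOf_eq, hmem]
      simp only [F, f, Finset.coe_erase, Set.mem_diff, Finset.mem_coe, Finset.mem_biUnion,
        Finset.mem_Icc, Finset.mem_image, Finset.mem_range, Set.mem_singleton_iff]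
      constructor
      · rintro ⟨hd, j, h1, h2, z, hz, h⟩
        exact ⟨⟨j, ⟨h1, h2⟩, z, hz, h.symm⟩, by omega⟩
      · rintro ⟨⟨j, ⟨h1, h2⟩, z, hz, h⟩, hd⟩
        exact ⟨by omega, j, h1, h2, z, hz, h.symm⟩
    have h0F : 0 ∈ F := by
      simp only [F, f, Finset.mem_biUnion, Finset.mem_Icc, Finset.mem_image, Finset.mem_range]
      refine ⟨t, ⟨ht, le_rfl⟩, Z t - 1, by omega, ?_⟩
      rw [hrt, hZt]; omega
    rw [hF, Set.ncard_coe_finset, Finset.card_erase_of_mem h0F, Finset.sum_congr rfl hdiv]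
    congr 1
    rw [Finset.card_biUnion]
    · refine Finset.sum_congr rfl (fun i hi => ?_)
      rw [Finset.mem_Icc] at hi
      rw [Finset.card_image_of_injOn, Finset.card_range]
      intro z hz w hw hzw
      simp only [Finset.coe_range, Set.mem_Iio] at hz hw
      have a1 := hbnd i z hi.1 hi.2 hz
      have a2 := hbnd i w hi.1 hi.2 hw
      have a3 := hpos i hi.2
      have a4 : z * r i = w * r i := by
        simp only [f] at hzw
        omega
      exact Nat.eq_of_mul_eq_mul_right a3 a4
    · have key : ∀ i j, 1 ≤ i → i < j → j ≤ t →
          Disjoint ((Finset.range (Z i)).image (f i)) ((Finset.range (Z j)).image (f j)) := by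
        intro i j h1 h2 h3
        rw [Finset.disjoint_left]
        intro d hd hd'
        simp only [f, Finset.mem_image, Finset.mem_range] at hd hd'
        obtain ⟨z, hz, h⟩ := hd
        obtain ⟨w, hw, h'⟩ := hd'
        have a1 := hbnd i z h1 (by omega) hz
        have a2 := hpos (i + 1) (by omega)
        have a3 := hanti' i (j - 1) (by omega) (by omega)
        have a4 := hpos (j - 1) (by omega)
        omega
      intro i hi j hj hij
      simp only [Finset.coe_Icc, Set.mem_Icc, Finset.mem_Icc] at hi hj
      rcases Nat.lt_or_gt_of_ne hij with h | h
      · exact key i j hi.1 h hj.2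
      · exact (key j i hj.1 h hi.2).symm
end

section
/- (Theorem 3) The number of distinct gaps of the binary inclusion-exclusion polynomial satisfies #G(p,q) ≤ p − 1, and #G(p,q) ≥ k, where k is the integer determined by F_k < p ≤ F_{k+1} and F₁ = 1, F₂ = 2, F₃ = 3, F₄ = 5, ... are the Fibonacci numbers (F_{k+1} = F_k + F_{k−1}). -/
/-- membership in the semigroup generated by p and q -/
def SM (p q n : ℕ) : Prop := ∃ l, l < p ∧ l * q ≤ n ∧ l * q ≡ n [MOD p]

theorem SM_add {p q n : ℕ} (h : SM p q n) : SM p q (n + p) := by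
  obtain ⟨l, h1, h2, h3⟩ := h
  exact ⟨l, h1, by omega, by simpa [Nat.ModEq] using h3⟩

theorem cancel_q {p q a b : ℕ} (hcop : Nat.Coprime p q) (ha : a < p) (hb : b < p)
    (h : a * q ≡ b * q [MOD p]) : a = b := by
  have := Nat.ModEq.cancel_right_of_coprime (by simpa using hcop) h
  exact Nat.ModEq.eq_of_lt_of_lt this ha hb

theorem SM_step {p q n : ℕ} (hcop : Nat.Coprime p q) (hp : 0 < p) (hn : p ≤ n) :
    (SM p q n ↔ SM p q (n - p) ∨ ∃ j < p, n = j * q) ∧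
    ¬ (SM p q (n - p) ∧ ∃ j < p, n = j * q) := by
  obtain ⟨m, rfl⟩ := Nat.exists_eq_add_of_le' hn
  rw [Nat.add_sub_cancel]
  refine ⟨⟨?_, ?_⟩, ?_⟩
  · rintro ⟨l, h1, h2, h3⟩
    have h3' : l * q ≡ m [MOD p] := by simpa [Nat.ModEq] using h3
    by_cases h : l * q ≤ m
    · exact Or.inl ⟨l, h1, h, h3'⟩
    · right
      refine ⟨l, h1, ?_⟩
      have : p ∣ l * q - m := (Nat.modEq_iff_dvd' (by omega)).1 h3'.symm
      have := Nat.le_of_dvd (by omega) this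
      omega
  · rintro (h | ⟨j, hj, h⟩)
    · exact SM_add h
    · exact ⟨j, hj, by omega, by rw [h]⟩
  · rintro ⟨⟨l, h1, h2, h3⟩, j, hj, h⟩
    have : l * q ≡ j * q [MOD p] := by
      rw [← h]; simpa [Nat.ModEq] using h3
    have := cancel_q hcop h1 hj this
    subst this
    omega

theorem SM_small {p q n : ℕ} (hcop : Nat.Coprime p q) (hn : n < p) :
    (SM p q n ↔ ∃ j < p, n = j * q) := by
  constructor
  · rintro ⟨l, h1, h2, h3⟩
    exact ⟨l, h1, (Nat.ModEq.eq_of_lt_of_lt h3 (by omega) hn).symm⟩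
  · rintro ⟨j, hj, h⟩
    exact ⟨j, hj, by omega, by rw [h]⟩

open Classical in
theorem SM_ps {p q : ℕ} (hcop : Nat.Coprime p q) (hp : 0 < p) (hq : 0 < q) :
    (PowerSeries.mk (fun n => if SM p q n then (1:ℤ) else 0)) * (1 - PowerSeries.X ^ p)
      = ∑ j ∈ Finset.range p, (PowerSeries.X : PowerSeries ℤ) ^ (j * q) := by
  ext n
  have e : (∑ j ∈ Finset.range p, if n = j * q then (1:ℤ) else 0)
      = if ∃ j < p, n = j * q then 1 else 0 := by
    split_ifs with h
    · obtain ⟨j, hj, rfl⟩ := h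
      rw [Finset.sum_eq_single j]
      · simp
      · intro b _ hb
        rw [if_neg]
        intro h
        exact hb (Nat.eq_of_mul_eq_mul_right hq h.symm)
      · intro h; simp at h; omega
    · apply Finset.sum_eq_zero
      intro j hj
      rw [if_neg]
      intro h'
      exact h ⟨j, by simpa using hj, h'⟩
  simp only [mul_sub, mul_one, map_sub, map_sum, PowerSeries.coeff_mk,
    PowerSeries.coeff_mul_X_pow', PowerSeries.coeff_X_pow, e]
  by_cases hn : p ≤ n
  · have := SM_step hcop hp hn
    rw [if_pos hn]
    by_cases h1 : SM p q (n - p) <;> by_cases h2 : ∃ j < p, n = j * q <;> by_cases h3 : SM p q n <;>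
      simp only [h1, h2, h3, if_true, if_false] <;> simp [h1, h2, h3] at this ⊢
  · have := SM_small (q := q) hcop (not_le.1 hn)
    simp [hn, this]

open Polynomial in
theorem Q_supp (p q : ℕ) (hp : 3 ≤ p) (hpq : p < q) (hcop : Nat.Coprime p q)
    (Q : Polynomial ℤ)
    (hQ : Q * ((1 - X ^ p) * (1 - X ^ q)) = (1 - X ^ (p * q)) * (1 - X)) (n : ℕ) :
    (n + 1) ∈ Q.support ↔ ¬ (SM p q (n + 1) ↔ SM p q n) := by
  classical
  have g : (∑ j ∈ Finset.range p, (X : Polynomial ℤ) ^ (j * q)) * (1 - X ^ q) = 1 - X ^ (p * q) := by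
    have := geom_sum_mul_neg ((X : Polynomial ℤ) ^ q) p
    simp only [← pow_mul] at this
    rw [mul_comm p q, ← this]
    simp only [mul_comm]
  have hne : ∀ m : ℕ, 0 < m → (1 - X ^ m : Polynomial ℤ) ≠ 0 := by
    intro m hm h
    have := congrArg (fun f => Polynomial.coeff f 0) h
    simp [Polynomial.coeff_one, Polynomial.coeff_X_pow, hm.ne, hm.ne'] at this
  have h1 : Q * (1 - X ^ p) = (1 - X) * ∑ j ∈ Finset.range p, (X : Polynomial ℤ) ^ (j * q) := by
    apply mul_right_cancel₀ (hne q (by omega))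
    rw [mul_assoc, hQ, ← g]; ring
  have h2 : (Q : PowerSeries ℤ) * (1 - PowerSeries.X ^ p) =
      (1 - PowerSeries.X) * ∑ j ∈ Finset.range p, (PowerSeries.X : PowerSeries ℤ) ^ (j * q) := by
    have := congrArg (Polynomial.coeToPowerSeries.ringHom (R := ℤ)) h1
    simpa [map_mul, map_sub, map_sum, map_pow] using this
  rw [← SM_ps hcop (by omega) (by omega), ← mul_assoc] at h2
  have hne' : (1 - PowerSeries.X ^ p : PowerSeries ℤ) ≠ 0 := by
    intro h
    have := congrArg (PowerSeries.coeff 0) h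
    have hp0 : p ≠ 0 := by omega
    simp [hp0] at this
  have h3 := congrArg (PowerSeries.coeff (n + 1)) (mul_right_cancel₀ hne' h2)
  rw [sub_mul, one_mul, map_sub, PowerSeries.coeff_succ_X_mul] at h3
  simp only [Polynomial.coeff_coe, PowerSeries.coeff_mk] at h3
  rw [Polynomial.mem_support_iff, h3]
  by_cases h1 : SM p q (n + 1) <;> by_cases h2 : SM p q n <;> simp [h1, h2]

/-- circular gaps -/
def CG (p q d : ℕ) : Prop := 1 ≤ d ∧ d ≤ p ∧ ∃ m i j, m < p ∧ i ≤ m ∧ j ≤ m ∧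
  i * q + d ≡ j * q [MOD p] ∧ ∀ l ≤ m, ∀ t, 0 < t → t < d → ¬ (i * q + t ≡ l * q [MOD p])

theorem CG_p {p q : ℕ} (hp : 3 ≤ p) : CG p q p := by
  refine ⟨by omega, le_rfl, 0, 0, 0, by omega, le_rfl, le_rfl, by simp [Nat.ModEq], ?_⟩
  intro l hl t h0 h1 h
  obtain rfl : l = 0 := by omega
  have : t = 0 := Nat.ModEq.eq_of_lt_of_lt (m := p) (by simpa using h) h1 (by omega)
  omega

theorem inv_q {p q : ℕ} (hp : 3 ≤ p) (hcop : Nat.Coprime p q) (c : ℕ) :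
    ∃ u < p, u * q ≡ c [MOD p] := by
  obtain ⟨m, -, hm⟩ := Nat.exists_mul_mod_eq_one_of_coprime hcop.symm (by omega)
  refine ⟨(m * c) % p, Nat.mod_lt _ (by omega), ?_⟩
  have h1 : q * m ≡ 1 [MOD p] := by rw [Nat.ModEq, hm, Nat.mod_eq_of_lt (by omega)]
  calc (m * c) % p * q ≡ m * c * q [MOD p] := (Nat.mod_modEq _ _).mul_right _
    _ = q * m * c := by ring
    _ ≡ 1 * c [MOD p] := h1.mul_right _
    _ = c := one_mul c

theorem CG_split {p q d : ℕ} (hp : 3 ≤ p) (hcop : Nat.Coprime p q)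
    (hd : 2 ≤ d) (h : CG p q d) : ∃ a b, CG p q a ∧ CG p q b ∧ a + b = d ∧ (a = b → a = 1) := by
  classical
  obtain ⟨-, hdp, m, i, j, hm, hi, hj, hij, hl⟩ := h
  have hex : ∃ l, ∃ t, 0 < t ∧ t < d ∧ i * q + t ≡ l * q [MOD p] := by
    obtain ⟨u, _, hu⟩ := inv_q hp hcop (i * q + 1)
    exact ⟨u, 1, by omega, by omega, hu.symm⟩
  have hlp : Nat.find hex < p := by
    obtain ⟨u, hup, hu⟩ := inv_q hp hcop (i * q + 1)
    exact lt_of_le_of_lt (Nat.find_min' hex ⟨1, by omega, by omega, hu.symm⟩) hup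
  obtain ⟨t, ht0, htd, ht⟩ := Nat.find_spec hex
  have hmin : ∀ l' < Nat.find hex, ∀ t, 0 < t → t < d → ¬ i * q + t ≡ l' * q [MOD p] :=
    fun l' h t h1 h2 h3 => Nat.find_min hex h ⟨t, h1, h2, h3⟩
  generalize Nat.find hex = l at *
  have hml : m < l := by
    by_contra hc
    exact hl l (by omega) t ht0 htd ht
  have huniq : ∀ l' ≤ l, ∀ t', 0 < t' → t' < d → i * q + t' ≡ l' * q [MOD p] → t' = t := by
    intro l' hl' t' h1 h2 h3
    rcases hl'.lt_or_eq with h | rfl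
    · exact absurd h3 (hmin l' h t' h1 h2)
    · have : i * q + t' ≡ i * q + t [MOD p] := h3.trans ht.symm
      exact Nat.ModEq.eq_of_lt_of_lt (Nat.ModEq.add_left_cancel' _ this) (by omega) (by omega)
  refine ⟨t, d - t, ⟨ht0, by omega, l, i, l, hlp, by omega, le_rfl, ht, ?_⟩,
    ⟨by omega, by omega, l, l, j, hlp, le_rfl, by omega, ?_, ?_⟩, by omega, ?_⟩
  · intro l' hl' t' h1 h2 h3
    have := huniq l' hl' t' h1 (by omega) h3
    omega
  · have := (ht.symm.add_right (d - t)).trans (by rw [show i * q + t + (d - t) = i * q + d by omega])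
    exact this.trans hij
  · intro l' hl' t' h1 h2 h3
    have : i * q + (t + t') ≡ l' * q [MOD p] := by
      rw [← add_assoc]; exact (ht.add_right t').trans h3
    have := huniq l' hl' (t + t') (by omega) (by omega) this
    omega
  · intro he
    by_contra ht1
    have hd2 : d = t + t := by omega
    have h2l : p ≤ 2 * l := by
      have h1 : (2 * l) * q ≡ (i + j) * q [MOD p] := by
        have a1 := ht.symm.add ht.symm
        have a2 := hij.add_left (i * q)
        have a3 : i * q + t + (i * q + t) = i * q + (i * q + d) := by omega
        rw [a3] at a1
        have := a1.trans a2
        rwa [← add_mul, ← add_mul, ← two_mul] at this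
      have h2 : 2 * l ≡ i + j [MOD p] :=
        Nat.ModEq.cancel_right_of_coprime (by simpa using hcop) h1
      have h3 : p ∣ 2 * l - (i + j) := (Nat.modEq_iff_dvd' (by omega)).1 h2.symm
      have := Nat.le_of_dvd (by omega) h3
      omega
    obtain ⟨u, hup, hu⟩ := inv_q hp hcop 1
    have hu0 : u ≠ 0 := by
      rintro rfl
      have : 0 = 1 := Nat.ModEq.eq_of_lt_of_lt (m := p) (by simpa using hu) (by omega) (by omega)
      omega
    by_cases hul : u ≤ l
    · apply hmin (l - u) (by omega) (t - 1) (by omega) (by omega)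
      apply Nat.ModEq.add_right_cancel hu.symm
      rw [← add_mul, show l - u + u = l by omega, show i * q + (t - 1) + 1 = i * q + t by omega]
      exact ht
    · apply hmin (l - (p - u)) (by omega) (t + 1) (by omega) (by omega)
      have e1 : (l - (p - u)) * q + p * q = l * q + u * q := by
        rw [← add_mul, ← add_mul]; congr 1; omega
      have e2 : (l - (p - u)) * q ≡ (l - (p - u)) * q + p * q [MOD p] := by simp [Nat.ModEq]
      rw [e1] at e2
      rw [← add_assoc]
      exact ((ht.add hu.symm)).trans e2.symm

theorem CG_run {p q d : ℕ} (hp : 3 ≤ p) (hpq : p < q) (hd : 2 ≤ d) (h : CG p q d) :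
    ∃ n, SM p q n ∧ SM p q (n + d) ∧ ∀ t, 0 < t → t < d → ¬ SM p q (n + t) := by
  obtain ⟨-, hdp, m, i, j, hm, hi, hj, hij, hl⟩ := h
  by_cases hc : j ≤ i
  · refine ⟨i * q, ⟨i, by omega, le_rfl, rfl⟩, ⟨j, by omega, ?_, hij.symm⟩, ?_⟩
    · have := Nat.mul_le_mul_right q hc
      omega
    · rintro t h0 h1 ⟨l, h2, h3, h4⟩
      refine hl l ?_ t h0 h1 h4.symm
      by_contra hli
      have := Nat.mul_le_mul_right q (show i + 1 ≤ l by omega)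
      rw [add_mul] at this
      omega
  · have hq := Nat.mul_le_mul_right q (show i + 1 ≤ j by omega)
    rw [add_mul, one_mul] at hq
    have key : ∀ t, i * q + t ≡ (j * q - d) + t [MOD p] := by
      intro t
      apply Nat.ModEq.add_right
      apply Nat.ModEq.add_right_cancel' d
      rw [show j * q - d + d = j * q by omega]
      exact hij
    refine ⟨j * q - d, ⟨i, by omega, by omega, key 0⟩, ?_, ?_⟩
    · rw [show j * q - d + d = j * q by omega]
      exact ⟨j, by omega, le_rfl, rfl⟩
    · rintro t h0 h1 ⟨l, h2, h3, h4⟩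
      refine hl l ?_ t h0 h1 ((key t).trans h4.symm)
      by_contra hli
      have := Nat.mul_le_mul_right q (show j ≤ l by omega)
      omega

theorem fib_count (F : ℕ → ℕ) (hF1 : F 1 = 1) (hF2 : F 2 = 2)
    (hFrec : ∀ k, 1 ≤ k → F (k + 2) = F (k + 1) + F k) (E : Finset ℕ)
    (hE1 : ∀ d ∈ E, 1 ≤ d)
    (hE : ∀ d ∈ E, 2 ≤ d → ∃ a b, a ∈ E ∧ b ∈ E ∧ a + b = d ∧ (a = b → a = 1)) :
    (∀ a b, 1 ≤ a → a ≤ b → F a ≤ F b) ∧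
    ∀ d ∈ E, d ≤ F ((E.filter (fun e => 2 ≤ e ∧ e ≤ d)).card + 1) := by
  have mono : ∀ a b, 1 ≤ a → a ≤ b → F a ≤ F b := by
    intro a b ha hab
    induction b, hab using Nat.le_induction with
    | base => exact le_rfl
    | succ n hn ih =>
      refine ih.trans ?_
      obtain ⟨c, rfl⟩ := Nat.exists_eq_add_of_le' (ha.trans hn)
      rcases c with _ | c
      · simp [hF1, hF2]
      · rw [hFrec (c + 1) (by omega)]; omega
  refine ⟨mono, ?_⟩
  have lt : ∀ a b, b ∈ E → 2 ≤ b → a < b → (E.filter (fun e => 2 ≤ e ∧ e ≤ a)).card <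
      (E.filter (fun e => 2 ≤ e ∧ e ≤ b)).card := by
    intro a b hb h2 hab
    apply Finset.card_lt_card
    rw [Finset.ssubset_iff_of_subset]
    · exact ⟨b, by simp [hb, h2], by simp; omega⟩
    · intro x; simp only [Finset.mem_filter]; intro h; exact ⟨h.1, h.2.1, by omega⟩
  intro d
  induction d using Nat.strong_induction_on with
  | _ d ih =>
    intro hd
    have hd1 := hE1 d hd
    by_cases h2 : 2 ≤ d
    · obtain ⟨a, b, ha, hb, hab, h1⟩ := hE d hd h2
      wlog hle : a ≤ b generalizing a b
      · exact this b a hb ha (by omega) (fun h => by have := h1 h.symm; omega) (by omega)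
      have ha1 := hE1 a ha
      by_cases hc : a = b
      · have := h1 hc
        have hd2 : d = 2 := by omega
        have := lt 1 d hd h2 (by omega)
        have := mono 2 ((E.filter (fun e => 2 ≤ e ∧ e ≤ d)).card + 1) (by omega) (by omega)
        omega
      · have l1 := lt b d hd h2 (by omega)
        have l2 := lt a b hb (by omega) (by omega)
        have i1 := ih a (by omega) ha
        have i2 := ih b (by omega) hb
        generalize (E.filter (fun e => 2 ≤ e ∧ e ≤ d)).card = x at *
        generalize (E.filter (fun e => 2 ≤ e ∧ e ≤ a)).card = y at *
        generalize (E.filter (fun e => 2 ≤ e ∧ e ≤ b)).card = z at *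
        obtain ⟨w, rfl⟩ : ∃ w, x = w + 1 := ⟨x - 1, by omega⟩
        rw [hFrec w (by omega)]
        have := mono (z + 1) (w + 1) (by omega) (by omega)
        have := mono (y + 1) w (by omega) (by omega)
        omega
    · have := mono 1 ((E.filter (fun e => 2 ≤ e ∧ e ≤ d)).card + 1) (by omega) (by omega)
      omega

open Polynomial in
/-- Theorem 3: the number of distinct gaps of the binary inclusion–exclusion
polynomial satisfies `#G(p,q) ≤ p - 1` and `#G(p,q) ≥ k`, where `k` is determined by
`F_k < p ≤ F_{k+1}` for the Fibonacci numbers `F₁ = 1, F₂ = 2, F_{k+1} = F_k + F_{k-1}`. -/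
theorem stmt_19 (p q : ℕ) (hp : 3 ≤ p) (hpq : p < q) (hcop : Nat.Coprime p q)
    (Q : Polynomial ℤ)
    (hQ : Q * ((1 - X ^ p) * (1 - X ^ q)) = (1 - X ^ (p * q)) * (1 - X))
    (F : ℕ → ℕ) (hF1 : F 1 = 1) (hF2 : F 2 = 2)
    (hFrec : ∀ k, 1 ≤ k → F (k + 2) = F (k + 1) + F k) :
    Set.ncard {d : ℕ | ∃ a b : ℕ, a ∈ Q.support ∧ b ∈ Q.support ∧ a < b ∧
        (∀ c ∈ Q.support, ¬ (a < c ∧ c < b)) ∧ d = b - a} ≤ p - 1 ∧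
    ∀ k : ℕ, 1 ≤ k → F k < p → p ≤ F (k + 1) →
      k ≤ Set.ncard {d : ℕ | ∃ a b : ℕ, a ∈ Q.support ∧ b ∈ Q.support ∧ a < b ∧
        (∀ c ∈ Q.support, ¬ (a < c ∧ c < b)) ∧ d = b - a} := by
  classical
  have hS := Q_supp p q hp hpq hcop Q hQ
  set G := {d : ℕ | ∃ a b : ℕ, a ∈ Q.support ∧ b ∈ Q.support ∧ a < b ∧
        (∀ c ∈ Q.support, ¬ (a < c ∧ c < b)) ∧ d = b - a} with hG
  have hsub : G ⊆ (Finset.Icc 1 (p - 1) : Finset ℕ) := by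
    rintro d ⟨a, b, ha, hb, hab, hc, rfl⟩
    rw [Finset.coe_Icc, Set.mem_Icc]
    refine ⟨by omega, ?_⟩
    by_contra hlt
    have hconst : ∀ t, a + t < b → (SM p q (a + t) ↔ SM p q a) := by
      intro t
      induction t with
      | zero => intro _; exact Iff.rfl
      | succ t ih =>
        intro h
        rw [← ih (by omega)]
        by_contra hh
        exact hc (a + t + 1) ((hS (a + t)).2 hh) ⟨by omega, by omega⟩
    have hmul : ∃ t < p, (a + t) % p = 0 := by
      have h1 : a % p < p := Nat.mod_lt _ (by omega)
      by_cases h0 : a % p = 0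
      · exact ⟨0, by omega, by simpa using h0⟩
      · refine ⟨p - a % p, by omega, ?_⟩
        have h2 := Nat.div_add_mod a p
        have : a + (p - a % p) = p * (a / p + 1) := by rw [mul_add]; omega
        rw [this]; simp
    obtain ⟨t, ht, htm⟩ := hmul
    have hSa : SM p q a := by
      rw [← hconst t (by omega)]
      exact ⟨0, by omega, by omega, by simp [Nat.ModEq, htm]⟩
    have hall : ∀ t, SM p q (a + t) := by
      intro t
      induction t using Nat.strong_induction_on with
      | _ t ih =>
        by_cases h : t < p
        · exact (hconst t (by omega)).2 hSa
        · have := SM_add (ih (t - p) (by omega))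
          rwa [show a + (t - p) + p = a + t by omega] at this
    obtain ⟨c, rfl⟩ : ∃ c, b = a + c + 1 := ⟨b - a - 1, by omega⟩
    exact (hS (a + c)).1 hb ⟨fun _ => hall c, fun _ => hall (c + 1)⟩
  have hfin : G.Finite := (Finset.finite_toSet _).subset hsub
  refine ⟨?_, ?_⟩
  · have := Set.ncard_le_ncard hsub (Finset.finite_toSet _)
    rw [Set.ncard_coe_finset] at this
    simpa using this
  · intro k hk hkp _
    set E := (Finset.range (p + 1)).filter (fun d => CG p q d) with hE
    have hmem : ∀ d, d ∈ E ↔ CG p q d := by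
      intro d
      simp only [hE, Finset.mem_filter, Finset.mem_range]
      exact ⟨fun h => h.2, fun h => ⟨by have := h.2.1; omega, h⟩⟩
    obtain ⟨mono, hfc⟩ := fib_count F hF1 hF2 hFrec E (fun d hd => ((hmem d).1 hd).1) (by
      intro d hd h2
      obtain ⟨a, b, h⟩ := CG_split hp hcop h2 ((hmem d).1 hd)
      exact ⟨a, b, (hmem a).2 h.1, (hmem b).2 h.2.1, h.2.2⟩)
    have hpF := hfc p ((hmem p).2 (CG_p hp))
    set E2 := E.filter (fun e => 2 ≤ e ∧ e ≤ p) with hE2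
    have hkE : k ≤ E2.card := by
      by_contra hh
      have := mono (E2.card + 1) k (by omega) (by omega)
      omega
    refine hkE.trans ?_
    have himg : ((E2.image (fun e => e - 1) : Finset ℕ) : Set ℕ) ⊆ G := by
      intro x hx
      simp only [Finset.coe_image, Set.mem_image, Finset.mem_coe, hE2, Finset.mem_filter] at hx
      obtain ⟨d, ⟨hd, h2, -⟩, rfl⟩ := hx
      obtain ⟨n, h0, h1, h3⟩ := CG_run hp hpq h2 ((hmem d).1 hd)
      refine ⟨n + 1, n + d, ?_, ?_, by omega, ?_, by omega⟩
      · rw [hS]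
        have := h3 1 (by omega) (by omega)
        tauto
      · have e : n + d = n + (d - 1) + 1 := by omega
        rw [e, hS, ← e]
        have := h3 (d - 1) (by omega) (by omega)
        tauto
      · rintro c hc ⟨hc1, hc2⟩
        obtain ⟨t, rfl⟩ : ∃ t, c = n + t + 1 := ⟨c - n - 1, by omega⟩
        rw [hS] at hc
        have a1 := h3 t (by omega) (by omega)
        have a2 := h3 (t + 1) (by omega) (by omega)
        rw [← add_assoc] at a2
        tauto
    have hcard : (E2.image (fun e => e - 1)).card = E2.card := by
      apply Finset.card_image_of_injOn
      intro x hx y hy hxy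
      simp only [hE2, Finset.coe_filter, Set.mem_setOf_eq] at hx hy
      simp only at hxy
      omega
    have := Set.ncard_le_ncard himg hfin
    rwa [Set.ncard_coe_finset, hcard] at this
end
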